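/- arXiv:1503.01748 — 4 statements merged into one kernel-verified Lean document; each statement's English description precedes it below -/
import Mathlib

section
/- Asymptotics of the fundamental solutions (Lemma on X₁, X₂): There exists a constant C > 0 such that for all λ ∈ ℂ with |λ| ≥ 1 and all x ∈ [0,T]: ‖X₁(x,λ) − (cos(λx), sin(λx))ᵀ‖ ≤ (C/|λ|) e^{|Im λ| x} and ‖X₂(x,λ) − (−sin(λx), cos(λx))ᵀ‖ ≤ (C/|λ|) e^{|Im λ| x}. -/
open MeasureTheory Set Filter

noncomputable section

/-- A function `f : ℝ → ℂ` is absolutely continuous on `[0, T]`: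
it is the indefinite integral of an integrable function. -/
def AbsContOn (f : ℝ → ℂ) (T : ℝ) : Prop :=
  ∃ g : ℝ → ℂ, IntervalIntegrable g volume 0 T ∧
    ∀ x ∈ Icc (0 : ℝ) T, f x = f 0 + ∫ t in (0 : ℝ)..x, g t

/-- `y : ℝ → ℂ × ℂ` is a solution of the Dirac system `B y' + Ω y = λ y` on `[0, T]`,
where `B = ![![0,1],![-1,0]]` and `Ω = ![![p,q],![q,-p]]`:  `y` is continuous on `[0,T]`
and satisfies the equivalent system of integral equations coming from
`y₁' = q y₁ - (p + λ) y₂`, `y₂' = (λ - p) y₁ - q y₂`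
(this encodes: `y` is absolutely continuous and the ODE holds a.e.). -/
def IsDiracSol (p q : ℝ → ℂ) (T : ℝ) (lam : ℂ) (y : ℝ → ℂ × ℂ) : Prop :=
  ContinuousOn y (Icc (0 : ℝ) T) ∧
    ∀ x ∈ Icc (0 : ℝ) T,
      ((y x).1 = (y 0).1 + ∫ t in (0 : ℝ)..x, (q t * (y t).1 - (p t + lam) * (y t).2)) ∧
      ((y x).2 = (y 0).2 + ∫ t in (0 : ℝ)..x, ((lam - p t) * (y t).1 - q t * (y t).2))

/-- A nonlocal linear form `U(y) = ∫_{[0,T]} y₁ dμ₁ + ∫_{[0,T]} y₂ dμ₂`, where the complex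
Borel measures `μᵢ` are encoded (via Radon–Nikodym) as integrable complex densities `wᵢ`
with respect to finite positive measures. -/
structure NonlocalForm (T : ℝ) where
  μ₁ : Measure ℝ
  μ₂ : Measure ℝ
  finite₁ : IsFiniteMeasure μ₁
  finite₂ : IsFiniteMeasure μ₂
  w₁ : ℝ → ℂ
  w₂ : ℝ → ℂ
  int₁ : Integrable w₁ μ₁
  int₂ : Integrable w₂ μ₂

namespace NonlocalForm

variable {T : ℝ}

/-- The value `U(y)` of the nonlocal form on a function `y`. -/
def app (U : NonlocalForm T) (y : ℝ → ℂ × ℂ) : ℂ :=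
  (∫ t in Icc (0 : ℝ) T, U.w₁ t * (y t).1 ∂U.μ₁) +
    ∫ t in Icc (0 : ℝ) T, U.w₂ t * (y t).2 ∂U.μ₂

/-- `h₁ = μ₁({0})`, the mass of the first complex measure at `0`. -/
def h₁ (U : NonlocalForm T) : ℂ := U.w₁ 0 * ((U.μ₁ {0}).toReal : ℂ)

/-- `h₂ = μ₂({0})`, the mass of the second complex measure at `0`. -/
def h₂ (U : NonlocalForm T) : ℂ := U.w₂ 0 * ((U.μ₂ {0}).toReal : ℂ)

end NonlocalForm

/-- A two-point (local) linear form `y ↦ c₁ y₁(t) + c₂ y₂(t)`. -/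
def locForm (c₁ c₂ : ℂ) (t : ℝ) (y : ℝ → ℂ × ℂ) : ℂ := c₁ * (y t).1 + c₂ * (y t).2

/-- `f` and `g` have the same order of zero at `z` (order possibly `0` or `∞`):
for every `n`, the first `n` derivatives of `f` vanish at `z` iff
the first `n` derivatives of `g` do. -/
def ZeroOrderEq (f g : ℂ → ℂ) (z : ℂ) : Prop :=
  ∀ n : ℕ, (∀ k < n, iteratedDeriv k f z = 0) ↔ (∀ k < n, iteratedDeriv k g z = 0)

/-- The filter of `λ → ∞` within the sector `arg λ ∈ [δ, π - δ]`. -/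
def sectorFilter (δ : ℝ) : Filter ℂ :=
  Filter.comap (fun lam : ℂ => ‖lam‖) Filter.atTop ⊓
    Filter.principal {lam : ℂ | Complex.arg lam ∈ Icc δ (Real.pi - δ)}

/-- Integration by parts for an indefinite integral, via Fubini. -/
lemma aux_ibp {x : ℝ} (hx : 0 ≤ x) {a g F F' : ℝ → ℂ}
    (hg : IntervalIntegrable g volume 0 x)
    (ha : ∀ t ∈ Icc (0 : ℝ) x, a t = a 0 + ∫ s in (0 : ℝ)..t, g s)
    (hF : ∀ t ∈ Icc (0 : ℝ) x, HasDerivAt F (F' t) t)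
    (hF' : IntervalIntegrable F' volume 0 x) :
    ∫ t in (0 : ℝ)..x, a t * F' t = a x * F x - a 0 * F 0 - ∫ t in (0 : ℝ)..x, g t * F t := by
  have hFc : ContinuousOn F (uIcc 0 x) := by
    rw [uIcc_of_le hx]
    exact fun t ht => (hF t ht).continuousAt.continuousWithinAt
  have ftc : ∀ s ∈ Icc (0 : ℝ) x, ∫ t in s..x, F' t = F x - F s := by
    intro s hs
    apply intervalIntegral.integral_eq_sub_of_hasDerivAt
    · intro t ht
      rw [uIcc_of_le hs.2] at ht
      exact hF t ⟨hs.1.trans ht.1, ht.2⟩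
    · apply hF'.mono_set
      rw [uIcc_of_le hs.2, uIcc_of_le hx]
      exact Icc_subset_Icc_left hs.1
  have hgF : IntervalIntegrable (fun t => g t * F t) volume 0 x := hg.mul_continuousOn hFc
  have hG : ContinuousOn (fun t => ∫ s in (0 : ℝ)..t, g s) (uIcc 0 x) :=
    intervalIntegral.continuousOn_primitive_interval' hg left_mem_uIcc
  have swap : ∫ t in (0 : ℝ)..x, (∫ s in (0 : ℝ)..t, g s) * F' t
      = ∫ s in (0 : ℝ)..x, g s * (F x - F s) := by
    have hgi : Integrable g (volume.restrict (Ioc 0 x)) :=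
      (intervalIntegrable_iff_integrableOn_Ioc_of_le hx).1 hg
    have hFi : Integrable F' (volume.restrict (Ioc 0 x)) :=
      (intervalIntegrable_iff_integrableOn_Ioc_of_le hx).1 hF'
    have hint : Integrable (Function.uncurry fun t s : ℝ =>
        {z : ℝ × ℝ | z.2 ≤ z.1}.indicator (fun z => F' z.1 * g z.2) (t, s))
        ((volume.restrict (Ioc 0 x)).prod (volume.restrict (Ioc 0 x))) :=
      (hFi.mul_prod hgi).indicator (measurableSet_le measurable_snd measurable_fst)
    have h := integral_integral_swap hint
    rw [intervalIntegral.integral_of_le hx, intervalIntegral.integral_of_le hx]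
    convert h using 1
    · apply setIntegral_congr_fun measurableSet_Ioc
      intro t ht
      have e : (fun s => {z : ℝ × ℝ | z.2 ≤ z.1}.indicator (fun z => F' z.1 * g z.2) (t, s))
          = (Iic t).indicator (fun s => F' t * g s) := by
        ext s; simp [indicator]
      simp only [e]
      rw [integral_indicator measurableSet_Iic, Measure.restrict_restrict measurableSet_Iic,
        integral_const_mul, intervalIntegral.integral_of_le ht.1.le, mul_comm]
      congr 3
      ext s
      simp only [mem_inter_iff, mem_Iic, mem_Ioc]
      constructor
      · rintro ⟨h1, h2⟩; exact ⟨h2, h1, h2.trans ht.2⟩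
      · rintro ⟨h1, h2, h3⟩; exact ⟨h2, h1⟩
    · apply setIntegral_congr_fun measurableSet_Ioc
      intro s hs
      have e : (fun t => {z : ℝ × ℝ | z.2 ≤ z.1}.indicator (fun z => F' z.1 * g z.2) (t, s))
          = (Ici s).indicator (fun t => F' t * g s) := by
        ext s; simp [indicator]
      simp only [e]
      rw [integral_indicator measurableSet_Ici, Measure.restrict_restrict measurableSet_Ici,
        integral_mul_const, ← ftc s ⟨hs.1.le, hs.2⟩, intervalIntegral.integral_of_le hs.2, mul_comm,
        ← integral_Icc_eq_integral_Ioc]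
      congr 3
      ext t
      simp only [mem_inter_iff, mem_Ici, mem_Icc, mem_Ioc]
      constructor
      · rintro ⟨h1, h2⟩; exact ⟨h1, hs.1.trans_le h1, h2⟩
      · rintro ⟨h1, h2, h3⟩; exact ⟨h1, h3⟩
  have e1 : ∫ t in (0 : ℝ)..x, a t * F' t
      = ∫ t in (0 : ℝ)..x, (a 0 * F' t + (∫ s in (0 : ℝ)..t, g s) * F' t) := by
    apply intervalIntegral.integral_congr
    intro t ht
    rw [uIcc_of_le hx] at ht
    simp only []
    rw [ha t ht]; ring
  rw [e1, intervalIntegral.integral_add (hF'.const_mul _) (hF'.continuousOn_mul hG), swap,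
    intervalIntegral.integral_const_mul, ftc 0 ⟨le_rfl, hx⟩, ha x ⟨hx, le_rfl⟩]
  have e2 : ∫ s in (0 : ℝ)..x, g s * (F x - F s)
      = (∫ s in (0 : ℝ)..x, g s) * F x - ∫ s in (0 : ℝ)..x, g s * F s := by
    rw [← intervalIntegral.integral_mul_const, ← intervalIntegral.integral_sub (hg.mul_const _) hgF]
    congr 1; ext s; ring
  rw [e2]; ring

lemma aux_exp_deriv (κ : ℂ) (u : ℝ → ℂ) (u' : ℂ) (t : ℝ) (h : HasDerivAt u u' t) :
    HasDerivAt (fun t : ℝ => Complex.exp (-κ * t) * u t)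
      (Complex.exp (-κ * t) * (u' - κ * u t)) t := by
  have h1 : HasDerivAt (fun t : ℝ => -κ * (t : ℂ)) (-κ) t := by
    simpa using (Complex.ofRealCLM.hasDerivAt (x := t)).const_mul (-κ)
  have h2 := h1.cexp.mul h
  refine h2.congr_deriv ?_
  ring

lemma aux_exp_norm (κ : ℂ) (t : ℝ) : ‖Complex.exp (-κ * t)‖ = Real.exp (-κ.re * t) := by
  rw [Complex.norm_exp]; simp

/-- Variation of constants. -/
lemma aux_voc {T : ℝ} {a u v : ℝ → ℂ} {κ : ℂ} (ha : Continuous a) (hu : Continuous u)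
    (hv : Continuous v)
    (hu' : ∀ t ∈ Icc (0 : ℝ) T, HasDerivAt u (κ * u t + a t * v t) t)
    {x : ℝ} (hx : x ∈ Icc (0 : ℝ) T) :
    ∫ t in (0 : ℝ)..x, Complex.exp (-κ * t) * (a t * v t)
      = Complex.exp (-κ * x) * u x - u 0 := by
  have := intervalIntegral.integral_eq_sub_of_hasDerivAt (a := 0) (b := x)
    (f := fun t : ℝ => Complex.exp (-κ * t) * u t)
    (f' := fun t : ℝ => Complex.exp (-κ * t) * (a t * v t)) ?_ ?_
  · simpa using this
  · intro t ht
    rw [uIcc_of_le hx.1] at ht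
    refine (aux_exp_deriv κ u _ t (hu' t ⟨ht.1, ht.2.trans hx.2⟩)).congr_deriv ?_
    ring
  · apply Continuous.intervalIntegrable
    fun_prop

lemma aux_half {T M τ : ℝ} {a u v : ℝ → ℂ} {κ : ℂ} (ha : Continuous a) (hu : Continuous u)
    (hv : Continuous v)
    (hu' : ∀ t ∈ Icc (0 : ℝ) T, HasDerivAt u (κ * u t + a t * v t) t)
    (haM : ∀ t, ‖a t‖ ≤ M) (hτ : |κ.re| ≤ τ)
    {x : ℝ} (hx : x ∈ Icc (0 : ℝ) T) :
    Real.exp (-τ * x) * ‖u x‖ ≤ ‖u 0‖ + M * ∫ t in (0 : ℝ)..x, Real.exp (-τ * t) * ‖v t‖ := by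
  have h := aux_voc ha hu hv hu' hx
  have e : u x = Complex.exp (κ * x) * (u 0 +
      ∫ t in (0 : ℝ)..x, Complex.exp (-κ * t) * (a t * v t)) := by
    rw [h, add_sub_cancel, ← mul_assoc, ← Complex.exp_add]; simp
  have hr := abs_le.1 hτ
  have b1 : ‖∫ t in (0 : ℝ)..x, Complex.exp (-κ * t) * (a t * v t)‖
      ≤ ∫ t in (0 : ℝ)..x, Real.exp ((τ - κ.re) * x) * (M * (Real.exp (-τ * t) * ‖v t‖)) := by
    apply intervalIntegral.norm_integral_le_of_norm_le hx.1
    · refine Eventually.of_forall fun t ht => ?_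
      rw [norm_mul, norm_mul, aux_exp_norm]
      calc Real.exp (-κ.re * t) * (‖a t‖ * ‖v t‖)
          ≤ (Real.exp ((τ - κ.re) * x) * Real.exp (-τ * t)) * (M * ‖v t‖) := by
            gcongr
            · rw [← Real.exp_add]
              apply Real.exp_le_exp.2
              nlinarith [ht.1, ht.2]
            · exact haM t
        _ = _ := by ring
    · apply Continuous.intervalIntegrable
      fun_prop
  rw [intervalIntegral.integral_const_mul, intervalIntegral.integral_const_mul] at b1
  have hM : 0 ≤ M := (norm_nonneg _).trans (haM 0)
  have hJ : 0 ≤ ∫ t in (0 : ℝ)..x, Real.exp (-τ * t) * ‖v t‖ :=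
    intervalIntegral.integral_nonneg hx.1 fun t _ => by positivity
  have hE : ‖Complex.exp (κ * x)‖ = Real.exp (κ.re * x) := by
    simpa using aux_exp_norm (-κ) x
  set J := ∫ t in (0 : ℝ)..x, Real.exp (-τ * t) * ‖v t‖
  rw [e, norm_mul, hE]
  calc Real.exp (-τ * x) * (Real.exp (κ.re * x) * ‖u 0 + _‖)
      ≤ Real.exp (-τ * x) * (Real.exp (κ.re * x) *
          (‖u 0‖ + Real.exp ((τ - κ.re) * x) * (M * J))) := by
        gcongr
        exact (norm_add_le _ _).trans (by gcongr)
    _ = Real.exp ((κ.re - τ) * x) * ‖u 0‖ + (Real.exp ((κ.re - τ) * x) *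
          Real.exp ((τ - κ.re) * x)) * (M * J) := by
        have : Real.exp ((κ.re - τ) * x) = Real.exp (-τ * x) * Real.exp (κ.re * x) := by
          rw [← Real.exp_add]; congr 1; ring
        rw [this]; ring
    _ = Real.exp ((κ.re - τ) * x) * ‖u 0‖ + M * J := by
        rw [← Real.exp_add]; ring_nf; simp
    _ ≤ ‖u 0‖ + M * J := by
        gcongr
        apply mul_le_of_le_one_left (norm_nonneg _)
        rw [Real.exp_le_one_iff]
        nlinarith [hx.1]

lemma aux_gronwall {T M τ : ℝ} {a b u v : ℝ → ℂ} {κ : ℂ}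
    (ha : Continuous a) (hb : Continuous b)
    (hu : Continuous u) (hv : Continuous v)
    (hu' : ∀ t ∈ Icc (0 : ℝ) T, HasDerivAt u (κ * u t + a t * v t) t)
    (hv' : ∀ t ∈ Icc (0 : ℝ) T, HasDerivAt v (-κ * v t + b t * u t) t)
    (haM : ∀ t, ‖a t‖ ≤ M) (hbM : ∀ t, ‖b t‖ ≤ M) (hτ : |κ.re| ≤ τ)
    (hu0 : ‖u 0‖ ≤ 1) (hv0 : ‖v 0‖ ≤ 1)
    {x : ℝ} (hx : x ∈ Icc (0 : ℝ) T) :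
    ‖u x‖ + ‖v x‖ ≤ 2 * Real.exp (M * T) * Real.exp (τ * x) := by
  have hM : 0 ≤ M := (norm_nonneg _).trans (haM 0)
  set m : ℝ → ℝ := fun t => Real.exp (-τ * t) * (‖u t‖ + ‖v t‖) with hm
  have hmc : Continuous m := by fun_prop
  set f : ℝ → ℝ := fun x => 2 + M * ∫ t in (0 : ℝ)..x, m t with hf
  have hmf : ∀ x ∈ Icc (0 : ℝ) T, m x ≤ f x := by
    intro x hx
    have h1 := aux_half ha hu hv hu' haM hτ hx
    have h2 := aux_half (κ := -κ) hb hv hu hv' hbM (by simpa using hτ) hx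
    have h3 : ∫ t in (0 : ℝ)..x, m t = (∫ t in (0 : ℝ)..x, Real.exp (-τ * t) * ‖u t‖) +
        ∫ t in (0 : ℝ)..x, Real.exp (-τ * t) * ‖v t‖ := by
      rw [← intervalIntegral.integral_add]
      · simp only [hm, mul_add]
      · exact Continuous.intervalIntegrable (by fun_prop) _ _
      · exact Continuous.intervalIntegrable (by fun_prop) _ _
    simp only [hf, h3]
    simp only [hm, mul_add]
    linarith
  have hfd : ∀ x, HasDerivAt f (M * m x) x := fun x =>
    ((hmc.integral_hasStrictDerivAt 0 x).hasDerivAt.const_mul M).const_add 2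
  have hm0 : ∀ t, 0 ≤ m t := fun t => by positivity
  have hg := norm_le_gronwallBound_of_norm_deriv_right_le (f := f) (f' := fun x => M * m x)
    (δ := 2) (K := M) (ε := 0) (a := 0) (b := T)
    (fun t _ => (hfd t).continuousAt.continuousWithinAt)
    (fun t _ => (hfd t).hasDerivWithinAt) (by simp [hf])
    (fun t ht => by
      rw [Real.norm_of_nonneg (mul_nonneg hM (hm0 t)), add_zero]
      gcongr
      exact (hmf t ⟨ht.1, ht.2.le⟩).trans (Real.le_norm_self _)) x hx
  rw [gronwallBound_ε0, sub_zero] at hg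
  have h5 : m x ≤ 2 * Real.exp (M * T) := by
    refine (hmf x hx).trans ((Real.le_norm_self _).trans (hg.trans ?_))
    gcongr
    exact hx.2
  calc ‖u x‖ + ‖v x‖ = m x * Real.exp (τ * x) := by
        simp only [hm]
        rw [mul_right_comm, ← Real.exp_add]; simp
    _ ≤ _ := by gcongr

lemma aux_main {T M τ G K : ℝ} {a b u v g : ℝ → ℂ} {κ : ℂ}
    (ha : Continuous a) (hb : Continuous b)
    (hu : Continuous u) (hv : Continuous v)
    (hu' : ∀ t ∈ Icc (0 : ℝ) T, HasDerivAt u (κ * u t + a t * v t) t)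
    (hv' : ∀ t ∈ Icc (0 : ℝ) T, HasDerivAt v (-κ * v t + b t * u t) t)
    (haM : ∀ t, ‖a t‖ ≤ M) (hbM : ∀ t, ‖b t‖ ≤ M) (hτ : |κ.re| ≤ τ)
    (hg : IntervalIntegrable g volume 0 T)
    (hag : ∀ t ∈ Icc (0 : ℝ) T, a t = a 0 + ∫ s in (0 : ℝ)..t, g s)
    (hG : ∫ t in (0 : ℝ)..T, ‖g t‖ ≤ G)
    (hK0 : 0 ≤ K)
    (hK : ∀ t ∈ Icc (0 : ℝ) T, ‖u t‖ + ‖v t‖ ≤ K * Real.exp (τ * t))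
    (hκ : κ ≠ 0)
    {x : ℝ} (hx : x ∈ Icc (0 : ℝ) T) :
    ‖u x - Complex.exp (κ * x) * u 0‖ ≤
      (2 * (M * K) + G * K + M * M * K * T) / ‖κ‖ * Real.exp (τ * x) := by
  have hM : 0 ≤ M := (norm_nonneg _).trans (haM 0)
  have hr := abs_le.1 hτ
  have hsub : Icc (0 : ℝ) x ⊆ Icc 0 T := Icc_subset_Icc_right hx.2
  have hgx : IntervalIntegrable g volume 0 x := hg.mono_set (by
    rw [uIcc_of_le hx.1, uIcc_of_le (hx.1.trans hx.2)]; exact hsub)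
  set F : ℝ → ℂ := fun t => Complex.exp (-κ * t) * v t with hFdef
  set R : ℝ → ℂ := fun t => a t * (Complex.exp (-κ * t) * (b t * u t)) with hRdef
  set S : ℝ → ℂ := fun t => Complex.exp (-κ * t) * (a t * v t) with hSdef
  set E : ℝ := Real.exp ((τ - κ.re) * x) with hE
  have hFc : Continuous F := by fun_prop
  have hRc : Continuous R := by fun_prop
  have hSc : Continuous S := by fun_prop
  have hib := aux_ibp (F := F)
    (F' := fun t => Complex.exp (-κ * t) * ((-κ * v t + b t * u t) - κ * v t)) hx.1 hgx
    (fun t ht => hag t (hsub ht)) (fun t ht => aux_exp_deriv κ v _ t (hv' t (hsub ht)))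
    (Continuous.intervalIntegrable (by fun_prop) _ _)
  have hsplit : ∫ t in (0 : ℝ)..x, a t *
      (Complex.exp (-κ * t) * ((-κ * v t + b t * u t) - κ * v t))
      = (∫ t in (0 : ℝ)..x, R t) - (2 * κ) * ∫ t in (0 : ℝ)..x, S t := by
    rw [← intervalIntegral.integral_const_mul, ← intervalIntegral.integral_sub
      (hRc.intervalIntegrable _ _) ((hSc.const_mul _).intervalIntegrable _ _)]
    congr 1; ext t; simp only [hRdef, hSdef]; ring
  rw [hsplit] at hib
  have hkey : (2 * κ) * ∫ t in (0 : ℝ)..x, S t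
      = (∫ t in (0 : ℝ)..x, R t) - a x * F x + a 0 * F 0 + ∫ t in (0 : ℝ)..x, g t * F t := by
    linear_combination -hib
  -- bounds
  have hexp : ∀ t ∈ Icc (0 : ℝ) x, ∀ w : ℂ, ‖w‖ ≤ K * Real.exp (τ * t) →
      ‖Complex.exp (-κ * t) * w‖ ≤ K * E := by
    intro t ht w hw
    rw [norm_mul, aux_exp_norm]
    calc Real.exp (-κ.re * t) * ‖w‖ ≤ Real.exp (-κ.re * t) * (K * Real.exp (τ * t)) := by gcongr
      _ = K * Real.exp ((τ - κ.re) * t) := by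
        rw [mul_left_comm, ← Real.exp_add]; congr 2; ring
      _ ≤ K * E := by
        gcongr
        apply Real.exp_le_exp.2
        nlinarith [ht.2]
  have hFb : ∀ t ∈ Icc (0 : ℝ) x, ‖F t‖ ≤ K * E := fun t ht =>
    hexp t ht _ (by linarith [hK t (hsub ht), norm_nonneg (u t)])
  have hUb : ∀ t ∈ Icc (0 : ℝ) x, ‖Complex.exp (-κ * t) * u t‖ ≤ K * E := fun t ht =>
    hexp t ht _ (by linarith [hK t (hsub ht), norm_nonneg (v t)])
  have b1 : ‖∫ t in (0 : ℝ)..x, R t‖ ≤ M * M * K * T * E := by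
    have := intervalIntegral.norm_integral_le_of_norm_le_const (a := 0) (b := x) (f := R)
      (C := M * M * (K * E)) ?_
    · rw [sub_zero, abs_of_nonneg hx.1] at this
      calc _ ≤ M * M * (K * E) * x := this
        _ ≤ M * M * (K * E) * T := by gcongr; exact hx.2
        _ = _ := by ring
    · intro t ht
      rw [uIoc_of_le hx.1] at ht
      have : R t = (a t * b t) * (Complex.exp (-κ * t) * u t) := by simp only [hRdef]; ring
      rw [this, norm_mul, norm_mul]
      gcongr
      · exact haM t
      · exact hbM t
      · exact hUb t ⟨ht.1.le, ht.2⟩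
  have b2 : ‖a x * F x‖ ≤ M * (K * E) := by
    rw [norm_mul]; gcongr
    · exact haM x
    · exact hFb x ⟨hx.1, le_rfl⟩
  have b3 : ‖a 0 * F 0‖ ≤ M * (K * E) := by
    rw [norm_mul]; gcongr
    · exact haM 0
    · exact hFb 0 ⟨le_rfl, hx.1⟩
  have b4 : ‖∫ t in (0 : ℝ)..x, g t * F t‖ ≤ G * (K * E) := by
    have h1 : ‖∫ t in (0 : ℝ)..x, g t * F t‖ ≤ ∫ t in (0 : ℝ)..x, ‖g t‖ * (K * E) := by
      apply intervalIntegral.norm_integral_le_of_norm_le hx.1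
      · refine Eventually.of_forall fun t ht => ?_
        rw [norm_mul]
        gcongr
        exact hFb t ⟨ht.1.le, ht.2⟩
      · exact hgx.norm.mul_const _
    rw [intervalIntegral.integral_mul_const] at h1
    refine h1.trans ?_
    gcongr
    refine le_trans ?_ hG
    apply intervalIntegral.integral_mono_interval le_rfl hx.1 hx.2
    · exact Eventually.of_forall fun t => norm_nonneg _
    · exact hg.norm
  have hSb : ‖κ‖ * ‖∫ t in (0 : ℝ)..x, S t‖ ≤ (2 * (M * K) + G * K + M * M * K * T) * E := by
    have h1 : 2 * (‖κ‖ * ‖∫ t in (0 : ℝ)..x, S t‖) ≤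
        M * M * K * T * E + M * (K * E) + M * (K * E) + G * (K * E) := by
      have : 2 * (‖κ‖ * ‖∫ t in (0 : ℝ)..x, S t‖) = ‖(2 * κ) * ∫ t in (0 : ℝ)..x, S t‖ := by
        rw [norm_mul, norm_mul]; simp [mul_assoc]
      rw [this, hkey]
      refine (norm_add_le _ _).trans (add_le_add ((norm_add_le _ _).trans (add_le_add
        ((norm_sub_le _ _).trans (add_le_add b1 b2)) b3)) b4)
    have h2 : 0 ≤ ‖κ‖ * ‖∫ t in (0 : ℝ)..x, S t‖ := by positivity
    linarith
  have e : u x - Complex.exp (κ * x) * u 0 = Complex.exp (κ * x) * ∫ t in (0 : ℝ)..x, S t := by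
    rw [aux_voc ha hu hv hu' hx, mul_sub, ← mul_assoc, ← Complex.exp_add]; simp
  have hE2 : ‖Complex.exp (κ * x)‖ = Real.exp (κ.re * x) := by
    simpa using aux_exp_norm (-κ) x
  have hκ' : 0 < ‖κ‖ := norm_pos_iff.2 hκ
  rw [e, norm_mul, hE2, div_mul_eq_mul_div, le_div_iff₀ hκ']
  calc Real.exp (κ.re * x) * ‖∫ t in (0 : ℝ)..x, S t‖ * ‖κ‖
      = Real.exp (κ.re * x) * (‖κ‖ * ‖∫ t in (0 : ℝ)..x, S t‖) := by ring
    _ ≤ Real.exp (κ.re * x) * ((2 * (M * K) + G * K + M * M * K * T) * E) := by gcongr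
    _ = (2 * (M * K) + G * K + M * M * K * T) * (Real.exp (κ.re * x) * E) := by ring
    _ = _ := by rw [hE, ← Real.exp_add]; ring_nf

lemma aux_absCont_cont {f : ℝ → ℂ} {g : ℝ → ℂ} {T : ℝ} (hT : 0 < T)
    (hg : IntervalIntegrable g volume 0 T)
    (h : ∀ x ∈ Icc (0 : ℝ) T, f x = f 0 + ∫ t in (0 : ℝ)..x, g t) :
    ContinuousOn f (Icc 0 T) := by
  have hG : ContinuousOn (fun t => ∫ s in (0 : ℝ)..t, g s) (uIcc 0 T) :=
    intervalIntegral.continuousOn_primitive_interval' hg left_mem_uIcc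
  rw [uIcc_of_le hT.le] at hG
  exact (continuousOn_const.add hG).congr h

/-- Extension of a function from `[0,T]` to `ℝ` by clamping the argument. -/
def auxExt {α : Type*} (T : ℝ) (f : ℝ → α) : ℝ → α := fun t => f (max 0 (min t T))

lemma auxExt_eq {α : Type*} {T : ℝ} {f : ℝ → α} {t : ℝ} (ht : t ∈ Icc (0 : ℝ) T) :
    auxExt T f t = f t := by
  simp [auxExt, min_eq_left ht.2, max_eq_right ht.1]

lemma aux_clamp_mem {T : ℝ} (hT : 0 < T) (t : ℝ) : max 0 (min t T) ∈ Icc (0 : ℝ) T :=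
  ⟨le_max_left _ _, max_le hT.le (min_le_right _ _)⟩

lemma auxExt_cont {α : Type*} [TopologicalSpace α] {T : ℝ} (hT : 0 < T) {f : ℝ → α}
    (hf : ContinuousOn f (Icc 0 T)) : Continuous (auxExt T f) :=
  hf.comp_continuous (by fun_prop) (aux_clamp_mem hT)

lemma aux_dirac (T : ℝ) (hT : 0 < T)
    (p q : ℝ → ℂ) (hp : AbsContOn p T) (hq : AbsContOn q T) :
    ∃ C > (0 : ℝ), ∀ lam : ℂ, 1 ≤ ‖lam‖ → ∀ y, IsDiracSol p q T lam y →
      ‖(y 0).1 + Complex.I * (y 0).2‖ ≤ 1 → ‖(y 0).1 - Complex.I * (y 0).2‖ ≤ 1 →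
      ∀ x ∈ Icc (0 : ℝ) T,
      ‖((y x).1 + Complex.I * (y x).2) -
        Complex.exp (Complex.I * lam * x) * ((y 0).1 + Complex.I * (y 0).2)‖ ≤
        C / ‖lam‖ * Real.exp (|lam.im| * x) ∧
      ‖((y x).1 - Complex.I * (y x).2) -
        Complex.exp (-(Complex.I * lam) * x) * ((y 0).1 - Complex.I * (y 0).2)‖ ≤
        C / ‖lam‖ * Real.exp (|lam.im| * x) := by
  obtain ⟨gp, hgp, hpg⟩ := hp
  obtain ⟨gq, hgq, hqg⟩ := hq
  have hpc := aux_absCont_cont hT hgp hpg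
  have hqc := aux_absCont_cont hT hgq hqg
  obtain ⟨Mp, hMp⟩ := isCompact_Icc.exists_bound_of_continuousOn hpc
  obtain ⟨Mq, hMq⟩ := isCompact_Icc.exists_bound_of_continuousOn hqc
  set P := auxExt T p with hP
  set Q := auxExt T q with hQ
  have hPc : Continuous P := auxExt_cont hT hpc
  have hQc : Continuous Q := auxExt_cont hT hqc
  have hPM : ∀ t, ‖P t‖ ≤ Mp := fun t => hMp _ (aux_clamp_mem hT t)
  have hQM : ∀ t, ‖Q t‖ ≤ Mq := fun t => hMq _ (aux_clamp_mem hT t)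
  set M := Mp + Mq with hMdef
  have hMp0 : 0 ≤ Mp := (norm_nonneg _).trans (hPM 0)
  have hMq0 : 0 ≤ Mq := (norm_nonneg _).trans (hQM 0)
  have hM0 : 0 ≤ M := add_nonneg hMp0 hMq0
  set G := (∫ t in (0 : ℝ)..T, ‖gq t‖) + ∫ t in (0 : ℝ)..T, ‖gp t‖ with hGdef
  have hG0 : 0 ≤ G := add_nonneg
    (intervalIntegral.integral_nonneg hT.le fun t _ => norm_nonneg _)
    (intervalIntegral.integral_nonneg hT.le fun t _ => norm_nonneg _)
  set K := 2 * Real.exp (M * T) with hKdef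
  have hK0 : 0 ≤ K := by positivity
  -- generic coefficient `Q + c P` with `‖c‖ = 1`
  have coefc : ∀ c : ℂ, Continuous fun t => Q t + c * P t := fun c => by fun_prop
  have coefM : ∀ c : ℂ, ‖c‖ = 1 → ∀ t, ‖Q t + c * P t‖ ≤ M := fun c hc t => by
    refine (norm_add_le _ _).trans ?_
    rw [norm_mul, hc, one_mul]
    linarith [hPM t, hQM t]
  have coefi : ∀ c : ℂ, IntervalIntegrable (fun t => gq t + c * gp t) volume 0 T := fun c =>
    hgq.add (hgp.const_mul c)
  have z0 : (0 : ℝ) ∈ Icc (0 : ℝ) T := ⟨le_rfl, hT.le⟩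
  have coefg : ∀ c : ℂ, ∀ t ∈ Icc (0 : ℝ) T, Q t + c * P t = Q 0 + c * P 0 +
      ∫ s in (0 : ℝ)..t, (gq s + c * gp s) := by
    intro c t ht
    have hs : uIcc 0 t ⊆ uIcc 0 T := by
      rw [uIcc_of_le ht.1, uIcc_of_le hT.le]; exact Icc_subset_Icc_right ht.2
    rw [intervalIntegral.integral_add (hgq.mono_set hs) ((hgp.mono_set hs).const_mul c),
      intervalIntegral.integral_const_mul, hP, hQ, auxExt_eq ht, auxExt_eq ht, auxExt_eq z0,
      auxExt_eq z0, hpg t ht, hqg t ht]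
    ring
  have coefG : ∀ c : ℂ, ‖c‖ = 1 → ∫ t in (0 : ℝ)..T, ‖gq t + c * gp t‖ ≤ G := by
    intro c hc
    rw [hGdef, ← intervalIntegral.integral_add hgq.norm hgp.norm]
    apply intervalIntegral.integral_mono_on hT.le (coefi c).norm (hgq.norm.add hgp.norm)
    intro t _
    refine (norm_add_le _ _).trans ?_
    rw [norm_mul, hc, one_mul]
  refine ⟨2 * (M * K) + G * K + M * M * K * T + 1, by positivity, ?_⟩
  intro lam hlam y ⟨hyc, hy⟩ hu0 hv0 x hx
  set Y := auxExt T y with hY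
  have hYc : Continuous Y := auxExt_cont hT hyc
  set d1 : ℝ → ℂ := fun t => Q t * (Y t).1 - (P t + lam) * (Y t).2 with hd1
  set d2 : ℝ → ℂ := fun t => (lam - P t) * (Y t).1 - Q t * (Y t).2 with hd2
  have hd1c : Continuous d1 := by fun_prop
  have hd2c : Continuous d2 := by fun_prop
  set y1 : ℝ → ℂ := fun x => (y 0).1 + ∫ t in (0 : ℝ)..x, d1 t with hy1
  set y2 : ℝ → ℂ := fun x => (y 0).2 + ∫ t in (0 : ℝ)..x, d2 t with hy2
  have hy1d : ∀ x, HasDerivAt y1 (d1 x) x := fun x =>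
    (hd1c.integral_hasStrictDerivAt 0 x).hasDerivAt.const_add _
  have hy2d : ∀ x, HasDerivAt y2 (d2 x) x := fun x =>
    (hd2c.integral_hasStrictDerivAt 0 x).hasDerivAt.const_add _
  have e1 : ∀ t ∈ Icc (0 : ℝ) T, (y t).1 = y1 t := by
    intro t ht
    rw [(hy t ht).1, hy1]
    congr 1
    apply intervalIntegral.integral_congr
    intro s hs
    rw [uIcc_of_le ht.1] at hs
    have hs' : s ∈ Icc (0 : ℝ) T := ⟨hs.1, hs.2.trans ht.2⟩
    simp only [hd1, hP, hQ, hY, auxExt_eq hs']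
  have e2 : ∀ t ∈ Icc (0 : ℝ) T, (y t).2 = y2 t := by
    intro t ht
    rw [(hy t ht).2, hy2]
    congr 1
    apply intervalIntegral.integral_congr
    intro s hs
    rw [uIcc_of_le ht.1] at hs
    have hs' : s ∈ Icc (0 : ℝ) T := ⟨hs.1, hs.2.trans ht.2⟩
    simp only [hd2, hP, hQ, hY, auxExt_eq hs']
  rw [e1 x hx, e2 x hx, e1 0 z0, e2 0 z0]
  rw [e1 0 z0, e2 0 z0] at hu0 hv0
  set u : ℝ → ℂ := fun t => y1 t + Complex.I * y2 t with hu
  set v : ℝ → ℂ := fun t => y1 t - Complex.I * y2 t with hv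
  have hy1c : Continuous y1 := continuous_iff_continuousAt.2 fun t => (hy1d t).continuousAt
  have hy2c : Continuous y2 := continuous_iff_continuousAt.2 fun t => (hy2d t).continuousAt
  have huc : Continuous u := by fun_prop
  have hvc : Continuous v := by fun_prop
  have hI := Complex.I_mul_I
  have hud : ∀ t ∈ Icc (0 : ℝ) T, HasDerivAt u
      ((Complex.I * lam) * u t + (Q t + (-Complex.I) * P t) * v t) t := by
    intro t ht
    refine ((hy1d t).add ((hy2d t).const_mul Complex.I)).congr_deriv ?_
    simp only [hd1, hd2, hu, hv, hY, auxExt_eq ht, e1 t ht, e2 t ht]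
    linear_combination (-lam * y2 t - P t * y2 t) * hI
  have hvd : ∀ t ∈ Icc (0 : ℝ) T, HasDerivAt v
      (-(Complex.I * lam) * v t + (Q t + Complex.I * P t) * u t) t := by
    intro t ht
    refine ((hy1d t).sub ((hy2d t).const_mul Complex.I)).congr_deriv ?_
    simp only [hd1, hd2, hu, hv, hY, auxExt_eq ht, e1 t ht, e2 t ht]
    linear_combination (-lam * y2 t - P t * y2 t) * hI
  have hτ : |(Complex.I * lam).re| ≤ |lam.im| := by simp
  have hτ' : |(-(Complex.I * lam)).re| ≤ |lam.im| := by simp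
  have nI : ‖-Complex.I‖ = 1 := by simp
  have nI' : ‖Complex.I‖ = 1 := by simp
  have hl0 : lam ≠ 0 := by rintro rfl; norm_num at hlam
  have hκ : Complex.I * lam ≠ 0 := mul_ne_zero Complex.I_ne_zero hl0
  have hKb : ∀ t ∈ Icc (0 : ℝ) T, ‖u t‖ + ‖v t‖ ≤ K * Real.exp (|lam.im| * t) := fun t ht =>
    aux_gronwall (coefc _) (coefc _) huc hvc hud hvd (coefM _ nI) (coefM _ nI') hτ hu0 hv0 ht
  have r1 := aux_main (coefc _) (coefc _) huc hvc hud hvd (coefM _ nI) (coefM _ nI') hτ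
    (coefi _) (coefg _) (coefG _ nI) hK0 hKb hκ hx
  have r2 := aux_main (coefc _) (coefc _) hvc huc hvd (by simpa only [neg_neg] using hud)
    (coefM _ nI') (coefM _ nI) hτ'
    (coefi _) (coefg _) (coefG _ nI') hK0 (fun t ht => by rw [add_comm]; exact hKb t ht)
    (neg_ne_zero.2 hκ) hx
  have n1 : ‖Complex.I * lam‖ = ‖lam‖ := by simp
  rw [n1] at r1
  rw [norm_neg, n1] at r2
  have hle : (2 * (M * K) + G * K + M * M * K * T) / ‖lam‖ * Real.exp (|lam.im| * x) ≤
      (2 * (M * K) + G * K + M * M * K * T + 1) / ‖lam‖ * Real.exp (|lam.im| * x) := by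
    gcongr ?_ / _ * _; exact (lt_add_one _).le
  exact ⟨r1.trans hle, r2.trans hle⟩

lemma aux_comb {A B : ℂ} {D : ℝ} {z w : ℂ} (hA : ‖A‖ ≤ D) (hB : ‖B‖ ≤ D)
    (h1 : A = z + Complex.I * w) (h2 : B = z - Complex.I * w) : ‖(z, w)‖ ≤ D := by
  rw [Prod.norm_mk]
  have e1 : 2 * z = A + B := by rw [h1, h2]; ring
  have e2 : 2 * (Complex.I * w) = A - B := by rw [h1, h2]; ring
  have n1 : 2 * ‖z‖ ≤ D + D := by
    have : 2 * ‖z‖ = ‖2 * z‖ := by simp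
    rw [this, e1]; exact (norm_add_le _ _).trans (add_le_add hA hB)
  have n2 : 2 * ‖w‖ ≤ D + D := by
    have : 2 * ‖w‖ = ‖2 * (Complex.I * w)‖ := by simp
    rw [this, e2]; exact (norm_sub_le _ _).trans (add_le_add hA hB)
  exact max_le (by linarith) (by linarith)

/-- **Asymptotics of the fundamental solutions** `X₁, X₂`: there is `C > 0` such that for
`|λ| ≥ 1` and `x ∈ [0,T]`,
`‖X₁(x,λ) - (cos λx, sin λx)ᵀ‖ ≤ (C/|λ|) e^{|Im λ| x}` and
`‖X₂(x,λ) - (-sin λx, cos λx)ᵀ‖ ≤ (C/|λ|) e^{|Im λ| x}`. -/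
theorem statement3
    (T : ℝ) (hT : 0 < T)
    (p q : ℝ → ℂ) (hp : AbsContOn p T) (hq : AbsContOn q T)
    (X₁ X₂ : ℂ → ℝ → ℂ × ℂ)
    (hX₁ : ∀ lam, IsDiracSol p q T lam (X₁ lam) ∧ X₁ lam 0 = (1, 0))
    (hX₂ : ∀ lam, IsDiracSol p q T lam (X₂ lam) ∧ X₂ lam 0 = (0, 1)) :
    ∃ C > (0 : ℝ), ∀ lam : ℂ, 1 ≤ ‖lam‖ → ∀ x ∈ Icc (0 : ℝ) T,
      ‖X₁ lam x - (Complex.cos (lam * (x : ℂ)), Complex.sin (lam * (x : ℂ)))‖ ≤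
        C / ‖lam‖ * Real.exp (|lam.im| * x) ∧
      ‖X₂ lam x - (-Complex.sin (lam * (x : ℂ)), Complex.cos (lam * (x : ℂ)))‖ ≤
        C / ‖lam‖ * Real.exp (|lam.im| * x) := by
  obtain ⟨C, hC, h⟩ := aux_dirac T hT p q hp hq
  refine ⟨C, hC, fun lam hlam x hx => ?_⟩
  have E1 : Complex.exp (Complex.I * lam * x)
      = Complex.cos (lam * x) + Complex.I * Complex.sin (lam * x) := by
    rw [show Complex.I * lam * x = (lam * x) * Complex.I by ring, Complex.exp_mul_I]; ring
  have E2 : Complex.exp (-(Complex.I * lam) * x)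
      = Complex.cos (lam * x) - Complex.I * Complex.sin (lam * x) := by
    rw [show -(Complex.I * lam) * x = (-(lam * x)) * Complex.I by ring, Complex.exp_mul_I,
      Complex.cos_neg, Complex.sin_neg]; ring
  have hI := Complex.I_mul_I
  constructor
  · obtain ⟨hs, h0⟩ := hX₁ lam
    have := h lam hlam _ hs (by simp [h0]) (by simp [h0]) x hx
    rw [h0, E1, E2] at this
    refine aux_comb this.1 this.2 ?_ ?_
    · simp only []; ring
    · simp only []; ring
  · obtain ⟨hs, h0⟩ := hX₂ lam
    have := h lam hlam _ hs (by simp [h0]) (by simp [h0]) x hx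
    rw [h0, E1, E2] at this
    refine aux_comb this.1 this.2 ?_ ?_
    · simp only []; linear_combination (-Complex.sin (lam * x)) * hI
    · simp only []; linear_combination (-Complex.sin (lam * x)) * hI
end
end

section
/- Existence of a Birkhoff-type fundamental system: There exist constants C > 0 and R ≥ 1 such that for every λ with Im λ ≥ 0 and |λ| ≥ R there exist solutions Y₁(·,λ), Y₂(·,λ) of the Dirac system with: (i) ‖e^{−iλx} Y₁(x,λ) − (1,−i)ᵀ‖ ≤ C/|λ| for all x ∈ [0,T]; (ii) ‖e^{iλx} Y₂(x,λ) − (1,i)ᵀ‖ ≤ C/|λ| for all x ∈ [0,T]; (iii) the Wronskian satisfies |Y₁,₁(x,λ)Y₂,₂(x,λ) − Y₁,₂(x,λ)Y₂,₁(x,λ) − 2i| ≤ C/|λ|. The analogous statement holds for Im λ ≤ 0. -/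
open MeasureTheory Set Filter

noncomputable section

/-! ### Auxiliary lemmas -/

lemma dk_hasDerivAt_prim {f : ℝ → ℂ} (hf : Continuous f) (c x : ℝ) :
    HasDerivAt (fun y => ∫ t in c..y, f t) (f x) x :=
  intervalIntegral.integral_hasDerivAt_right (hf.intervalIntegrable _ _)
    hf.aestronglyMeasurable.stronglyMeasurableAtFilter hf.continuousAt

lemma dk_bound_prim {g : ℝ → ℂ} (hg : Integrable g) (s x : ℝ) :
    ‖∫ t in s..x, g t‖ ≤ ∫ t, ‖g t‖ :=
  intervalIntegral.norm_integral_le_integral_norm_uIoc.trans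
    (setIntegral_le_integral hg.norm (Eventually.of_forall fun _ => norm_nonneg _))

lemma dk_exp_deriv (μ : ℂ) (hμ : μ ≠ 0) (x t : ℝ) :
    HasDerivAt (fun t : ℝ => -(Complex.exp (μ * ((x : ℂ) - (t : ℂ))) / μ))
      (Complex.exp (μ * ((x : ℂ) - (t : ℂ)))) t := by
  have h1 : HasDerivAt (fun t : ℝ => μ * ((x : ℂ) - (t : ℂ))) (μ * (0 - 1)) t :=
    ((hasDerivAt_const t (x : ℂ)).sub (Complex.ofRealCLM.hasDerivAt)).const_mul μ
  have h2 := (h1.cexp.div_const μ).neg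
  have e : Complex.exp (μ * ((x : ℂ) - (t : ℂ))) =
      -(Complex.exp (μ * ((x : ℂ) - (t : ℂ))) * (μ * (0 - 1)) / μ) := by
    rw [zero_sub, mul_neg, mul_one, mul_neg, neg_div, neg_neg, mul_div_cancel_right₀ _ hμ]
  rw [e]
  exact h2

lemma dk_kernel_smooth (μ : ℂ) (hμ : μ ≠ 0) (b0 : ℂ) (g : ℝ → ℂ) (hg : Continuous g)
    (hgi : Integrable g) (s x : ℝ)
    (hE : ∀ t ∈ uIcc s x, ‖Complex.exp (μ * ((x : ℂ) - (t : ℂ)))‖ ≤ 1) :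
    ‖∫ t in s..x, Complex.exp (μ * ((x : ℂ) - (t : ℂ))) * (b0 + ∫ r in (0 : ℝ)..t, g r)‖ ≤
      (2 * ‖b0‖ + 3 * ∫ t, ‖g t‖) / ‖μ‖ := by
  set G := ∫ t, ‖g t‖ with hG
  have hβ : ∀ t, HasDerivAt (fun t : ℝ => b0 + ∫ r in (0 : ℝ)..t, g r) (g t) t := fun t =>
    (dk_hasDerivAt_prim hg 0 t).const_add b0
  have hb : ∀ t : ℝ, ‖b0 + ∫ r in (0 : ℝ)..t, g r‖ ≤ ‖b0‖ + G := fun t =>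
    (norm_add_le _ _).trans (add_le_add le_rfl (dk_bound_prim hgi 0 t))
  have hμ' : 0 < ‖μ‖ := norm_pos_iff.2 hμ
  have hcE : Continuous fun t : ℝ => Complex.exp (μ * ((x : ℂ) - (t : ℂ))) := by fun_prop
  have ibp := intervalIntegral.integral_mul_deriv_eq_deriv_mul (a := s) (b := x)
    (fun t _ => hβ t) (fun t _ => dk_exp_deriv μ hμ x t)
    (hg.intervalIntegrable _ _) (hcE.intervalIntegrable _ _)
  have e1 : ∫ t in s..x, Complex.exp (μ * ((x : ℂ) - (t : ℂ))) * (b0 + ∫ r in (0 : ℝ)..t, g r) =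
      ∫ t in s..x, (b0 + ∫ r in (0 : ℝ)..t, g r) * Complex.exp (μ * ((x : ℂ) - (t : ℂ))) := by
    congr 1; ext t; ring
  rw [e1, ibp]
  have n1 : ∀ t ∈ uIcc s x, ‖-(Complex.exp (μ * ((x : ℂ) - (t : ℂ))) / μ)‖ ≤ 1 / ‖μ‖ := by
    intro t ht
    rw [norm_neg, norm_div]
    exact div_le_div_of_nonneg_right (hE t ht) hμ'.le
  have n2 : ∀ t ∈ uIcc s x, ‖(b0 + ∫ r in (0 : ℝ)..t, g r) *
      -(Complex.exp (μ * ((x : ℂ) - (t : ℂ))) / μ)‖ ≤ (‖b0‖ + G) * (1 / ‖μ‖) := by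
    intro t ht
    rw [norm_mul]
    exact mul_le_mul (hb t) (n1 t ht) (norm_nonneg _) ((norm_nonneg _).trans (hb t))
  have n3 : ‖∫ t in s..x, g t * -(Complex.exp (μ * ((x : ℂ) - (t : ℂ))) / μ)‖ ≤ G * (1 / ‖μ‖) := by
    refine intervalIntegral.norm_integral_le_integral_norm_uIoc.trans ?_
    calc _ ≤ ∫ t in uIoc s x, ‖g t‖ * (1 / ‖μ‖) := by
          refine setIntegral_mono_on ?_ (hgi.norm.mul_const _).integrableOn measurableSet_uIoc ?_
          · refine (Continuous.intervalIntegrable ?_ s x).def'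
            fun_prop
          · intro t ht
            rw [norm_mul]
            exact mul_le_mul_of_nonneg_left (n1 t (uIoc_subset_uIcc ht)) (norm_nonneg _)
      _ ≤ ∫ t, ‖g t‖ * (1 / ‖μ‖) :=
          setIntegral_le_integral (hgi.norm.mul_const _)
            (Eventually.of_forall fun _ => by positivity)
      _ = _ := by rw [integral_mul_const]
  refine (norm_sub_le _ _).trans ?_
  refine (add_le_add ((norm_sub_le _ _).trans
    (add_le_add (n2 x right_mem_uIcc) (n2 s left_mem_uIcc))) n3).trans (le_of_eq ?_)
  ring

lemma dk_kernel (μ : ℂ) (hμ : μ ≠ 0) (b0 : ℂ) (h : ℝ → ℂ)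
    (hh : Integrable h) (s x : ℝ)
    (hE : ∀ t ∈ uIcc s x, ‖Complex.exp (μ * ((x : ℂ) - (t : ℂ)))‖ ≤ 1) :
    ‖∫ t in s..x, Complex.exp (μ * ((x : ℂ) - (t : ℂ))) * (b0 + ∫ r in (0 : ℝ)..t, h r)‖ ≤
      (2 * ‖b0‖ + 3 * ∫ t, ‖h t‖) / ‖μ‖ := by
  have hμ' : 0 < ‖μ‖ := norm_pos_iff.2 hμ
  refine le_of_forall_pos_le_add fun ε' hε' => ?_
  set D : ℝ := 3 / ‖μ‖ + |x - s| with hD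
  have hDpos : 0 < D := by positivity
  set ε := ε' / D with hεdef
  have hε : 0 < ε := div_pos hε' hDpos
  obtain ⟨g, -, hge, hgc, hgi⟩ := hh.exists_hasCompactSupport_integral_sub_le hε
  have hcE : Continuous fun t : ℝ => Complex.exp (μ * ((x : ℂ) - (t : ℂ))) := by fun_prop
  have hc1 : Continuous fun t : ℝ => ∫ r in (0 : ℝ)..t, h r :=
    intervalIntegral.continuous_primitive (fun _ _ => hh.intervalIntegrable) 0
  have hc2 : Continuous fun t : ℝ => ∫ r in (0 : ℝ)..t, g r :=
    intervalIntegral.continuous_primitive (fun _ _ => hgi.intervalIntegrable) 0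
  have hG : ∫ t, ‖g t‖ ≤ (∫ t, ‖h t‖) + ε := by
    calc ∫ t, ‖g t‖ ≤ ∫ t, (‖h t‖ + ‖h t - g t‖) := by
          refine integral_mono hgi.norm (hh.norm.add (hh.sub hgi).norm) fun t => ?_
          have := norm_sub_le (h t) (h t - g t)
          simpa using this
      _ = (∫ t, ‖h t‖) + ∫ t, ‖h t - g t‖ := integral_add hh.norm (hh.sub hgi).norm
      _ ≤ _ := by linarith
  have key : ∫ t in s..x, Complex.exp (μ * ((x : ℂ) - (t : ℂ))) * (b0 + ∫ r in (0 : ℝ)..t, h r) =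
      (∫ t in s..x, Complex.exp (μ * ((x : ℂ) - (t : ℂ))) * (b0 + ∫ r in (0 : ℝ)..t, g r)) +
      ∫ t in s..x, Complex.exp (μ * ((x : ℂ) - (t : ℂ))) * (∫ r in (0 : ℝ)..t, (h r - g r)) := by
    have hc3 : Continuous fun t : ℝ => ∫ r in (0 : ℝ)..t, (h r - g r) :=
      intervalIntegral.continuous_primitive (fun _ _ => (hh.sub hgi).intervalIntegrable) 0
    rw [← intervalIntegral.integral_add]
    · congr 1; ext t
      rw [intervalIntegral.integral_sub hh.intervalIntegrable hgi.intervalIntegrable]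
      ring
    · exact (hcE.mul (continuous_const.add hc2)).intervalIntegrable _ _
    · exact (hcE.mul hc3).intervalIntegrable _ _
  have r2 : ‖∫ t in s..x, Complex.exp (μ * ((x : ℂ) - (t : ℂ))) *
      (∫ r in (0 : ℝ)..t, (h r - g r))‖ ≤ ε * |x - s| := by
    refine intervalIntegral.norm_integral_le_of_norm_le_const fun t ht => ?_
    rw [norm_mul]
    calc _ ≤ 1 * ε := mul_le_mul (hE t (uIoc_subset_uIcc ht))
            ((dk_bound_prim (hh.sub hgi) 0 t).trans hge) (norm_nonneg _) zero_le_one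
      _ = ε := one_mul _
  rw [key]
  refine (norm_add_le _ _).trans ((add_le_add (dk_kernel_smooth μ hμ b0 g hgc hgi s x hE) r2).trans ?_)
  have : ε * D = ε' := by rw [hεdef]; field_simp
  calc (2 * ‖b0‖ + 3 * ∫ t, ‖g t‖) / ‖μ‖ + ε * |x - s|
      ≤ (2 * ‖b0‖ + 3 * ((∫ t, ‖h t‖) + ε)) / ‖μ‖ + ε * |x - s| := by gcongr
    _ = (2 * ‖b0‖ + 3 * ∫ t, ‖h t‖) / ‖μ‖ + ε * D := by rw [hD]; ring
    _ = _ := by rw [this]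

lemma dk_fubini (μ : ℂ) (b f : ℝ → ℂ) (hb : Continuous b) (hf : Continuous f) (c x : ℝ) :
    ∫ t in c..x, Complex.exp (μ * ((x : ℂ) - (t : ℂ))) * (b t * ∫ r in c..t, f r) =
      ∫ t in c..x, (∫ r in t..x, Complex.exp (μ * ((x : ℂ) - (r : ℂ))) * b r) * f t := by
  have hcE : Continuous fun t : ℝ => Complex.exp (μ * ((x : ℂ) - (t : ℂ))) * b t := by fun_prop
  have h1 : ∀ t : ℝ, HasDerivAt (fun t : ℝ => ∫ r in x..t, Complex.exp (μ * ((x : ℂ) - (r : ℂ))) * b r)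
      (Complex.exp (μ * ((x : ℂ) - (t : ℂ))) * b t) t := dk_hasDerivAt_prim hcE x
  have h2 : ∀ t, HasDerivAt (fun t => ∫ r in c..t, f r) (f t) t := dk_hasDerivAt_prim hf c
  have ibp := intervalIntegral.integral_mul_deriv_eq_deriv_mul (a := c) (b := x)
    (fun t _ => h2 t) (fun t _ => h1 t)
    (hf.intervalIntegrable _ _) (hcE.intervalIntegrable _ _)
  simp only [intervalIntegral.integral_same, zero_mul, mul_zero, sub_zero, zero_sub] at ibp
  calc _ = ∫ t in c..x, (∫ r in c..t, f r) * (Complex.exp (μ * ((x : ℂ) - (t : ℂ))) * b t) := by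
        congr 1; ext t; ring
    _ = _ := by
        rw [ibp, ← intervalIntegral.integral_neg]
        congr 1; ext t
        rw [intervalIntegral.integral_symm t x]; ring

lemma dk_core (T : ℝ) (hT : 0 < T) (a b : ℝ → ℂ) (ha : Continuous a) (hb : Continuous b)
    (A κ : ℝ) (hA0 : 0 ≤ A) (hκ0 : 0 ≤ κ) (hA : ∀ x ∈ Icc (0 : ℝ) T, ‖a x‖ ≤ A)
    (μ : ℂ) (c : ℝ) (hc : c ∈ Icc (0 : ℝ) T)
    (hK : ∀ x ∈ Icc (0 : ℝ) T, ∀ s ∈ uIcc c x,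
      ‖∫ t in s..x, Complex.exp (μ * ((x : ℂ) - (t : ℂ))) * b t‖ ≤ κ)
    (hsmall : κ * A * T ≤ 1 / 2) :
    ∃ U V : ℝ → ℂ, Continuous U ∧ Continuous V ∧
      (∀ x ∈ Icc (0 : ℝ) T, HasDerivAt U (a x * V x) x) ∧
      (∀ x ∈ Icc (0 : ℝ) T, HasDerivAt V (μ * V x + b x * U x) x) ∧
      (∀ x ∈ Icc (0 : ℝ) T, ‖U x - 2‖ ≤ 4 * κ * A * T) ∧
      (∀ x ∈ Icc (0 : ℝ) T, ‖V x‖ ≤ 4 * κ) := by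
  have hsub : ∀ x ∈ Icc (0 : ℝ) T, uIcc c x ⊆ Icc 0 T := fun x hx => ordConnected_Icc.uIcc_subset hc hx
  have hlen : ∀ x ∈ Icc (0 : ℝ) T, |x - c| ≤ T := fun x hx => by
    rw [abs_le]; constructor <;> linarith [hx.1, hx.2, hc.1, hc.2]
  -- the linear part estimate
  have hL : ∀ f : ℝ → ℂ, Continuous f → ∀ N : ℝ, 0 ≤ N → (∀ x ∈ Icc (0 : ℝ) T, ‖f x‖ ≤ N) →
      ∀ x ∈ Icc (0 : ℝ) T,
      ‖∫ t in c..x, Complex.exp (μ * ((x : ℂ) - (t : ℂ))) * (b t * ∫ r in c..t, a r * f r)‖ ≤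
        N / 2 := by
    intro f hf N hN hfN x hx
    rw [dk_fubini μ b (fun r => a r * f r) hb (ha.mul hf) c x]
    have : ‖∫ t in c..x, (∫ r in t..x, Complex.exp (μ * ((x : ℂ) - (r : ℂ))) * b r) *
        (a t * f t)‖ ≤ (κ * (A * N)) * |x - c| := by
      refine intervalIntegral.norm_integral_le_of_norm_le_const fun t ht => ?_
      have ht' := uIoc_subset_uIcc ht
      have ht'' := hsub x hx ht'
      rw [norm_mul, norm_mul]
      have := hK x hx t ht'
      have := hA t ht''
      have := hfN t ht''
      gcongr
    refine this.trans ?_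
    calc (κ * (A * N)) * |x - c| ≤ (κ * (A * N)) * T := by
          gcongr; exact hlen x hx
      _ = (κ * A * T) * N := by ring
      _ ≤ (1 / 2) * N := by gcongr
      _ = N / 2 := by ring
  -- operator
  let Uf : (ℝ → ℂ) → ℝ → ℂ := fun f x => 2 + ∫ r in c..x, a r * f r
  let Ψ : (ℝ → ℂ) → ℝ → ℂ := fun f x =>
    Complex.exp (μ * (x : ℂ)) * ∫ t in c..x, Complex.exp (-(μ * (t : ℂ))) * (b t * Uf f t)
  have hUd : ∀ f, Continuous f → ∀ x, HasDerivAt (Uf f) (a x * f x) x := fun f hf x =>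
    (dk_hasDerivAt_prim (ha.mul hf) c x).const_add 2
  have hUc : ∀ f, Continuous f → Continuous (Uf f) := fun f hf =>
    continuous_iff_continuousAt.2 fun x => (hUd f hf x).continuousAt
  have hΨd : ∀ f, Continuous f → ∀ x, HasDerivAt (Ψ f) (μ * Ψ f x + b x * Uf f x) x := by
    intro f hf x
    have hUc' := hUc f hf
    have hc1 : Continuous fun t : ℝ => Complex.exp (-(μ * (t : ℂ))) * (b t * Uf f t) := by fun_prop
    have h1 := dk_hasDerivAt_prim hc1 c x
    have h0 : HasDerivAt (fun t : ℝ => μ * (t : ℂ)) (μ * 1) x :=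
      (Complex.ofRealCLM.hasDerivAt (x := x)).const_mul μ
    have h2 := h0.cexp.mul h1
    have e : Complex.exp (μ * (x : ℂ)) * Complex.exp (-(μ * (x : ℂ))) = 1 := by
      rw [← Complex.exp_add]; simp
    refine h2.congr_deriv ?_
    simp only [Ψ]
    linear_combination (b x * Uf f x) * e
  have hΨc : ∀ f, Continuous f → Continuous (Ψ f) := fun f hf =>
    continuous_iff_continuousAt.2 fun x => (hΨd f hf x).continuousAt
  have hΨe : ∀ f, Continuous f → ∀ x, Ψ f x =
      2 * (∫ t in c..x, Complex.exp (μ * ((x : ℂ) - (t : ℂ))) * b t) +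
      ∫ t in c..x, Complex.exp (μ * ((x : ℂ) - (t : ℂ))) * (b t * ∫ r in c..t, a r * f r) := by
    intro f hf x
    have hp : Continuous fun t => ∫ r in c..t, a r * f r :=
      continuous_iff_continuousAt.2 fun x => (dk_hasDerivAt_prim (ha.mul hf) c x).continuousAt
    simp only [Ψ, Uf]
    rw [← intervalIntegral.integral_const_mul, ← intervalIntegral.integral_const_mul,
      ← intervalIntegral.integral_add]
    · congr 1; ext t
      rw [mul_sub, sub_eq_add_neg, Complex.exp_add]
      ring
    · apply Continuous.intervalIntegrable; fun_prop
    · apply Continuous.intervalIntegrable; fun_prop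
  -- fixed point
  have h0T : (0 : ℝ) ≤ T := hT.le
  let ext : C(Icc (0 : ℝ) T, ℂ) → ℝ → ℂ := fun f => IccExtend h0T f
  have hextc : ∀ f, Continuous (ext f) := fun f => f.continuous.Icc_extend'
  have hextb : ∀ f x, ‖ext f x‖ ≤ ‖f‖ := fun f x => f.norm_coe_le_norm _
  let Φ : C(Icc (0 : ℝ) T, ℂ) → C(Icc (0 : ℝ) T, ℂ) := fun f =>
    ⟨fun x => Ψ (ext f) x, (hΨc _ (hextc f)).comp continuous_subtype_val⟩
  have hdiff : ∀ f g : C(Icc (0 : ℝ) T, ℂ), ∀ x ∈ Icc (0 : ℝ) T,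
      ‖Ψ (ext f) x - Ψ (ext g) x‖ ≤ ‖f - g‖ / 2 := by
    intro f g x hx
    have := hL (ext (f - g)) (hextc _) ‖f - g‖ (norm_nonneg _) (fun x _ => hextb _ x) x hx
    convert this using 2
    rw [hΨe _ (hextc f), hΨe _ (hextc g), add_sub_add_left_eq_sub,
      ← intervalIntegral.integral_sub]
    · congr 1; funext t
      rw [← mul_sub, ← mul_sub, ← intervalIntegral.integral_sub]
      · congr 2
        congr 1; funext r
        simp only [ext, IccExtend, Function.comp, ContinuousMap.sub_apply]
        ring
      · exact (ha.mul (hextc f)).intervalIntegrable _ _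
      · exact (ha.mul (hextc g)).intervalIntegrable _ _
    · have hp : Continuous fun t => ∫ r in c..t, a r * ext f r :=
        continuous_iff_continuousAt.2 fun x =>
          (dk_hasDerivAt_prim (ha.mul (hextc f)) c x).continuousAt
      apply Continuous.intervalIntegrable; fun_prop
    · have hp : Continuous fun t => ∫ r in c..t, a r * ext g r :=
        continuous_iff_continuousAt.2 fun x =>
          (dk_hasDerivAt_prim (ha.mul (hextc g)) c x).continuousAt
      apply Continuous.intervalIntegrable; fun_prop
  have hcontr : ContractingWith (1 / 2 : NNReal) Φ := by
    refine ⟨by rw [← NNReal.coe_lt_coe]; norm_num, LipschitzWith.of_dist_le_mul fun f g => ?_⟩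
    rw [dist_eq_norm, dist_eq_norm, ContinuousMap.norm_le _ (by positivity)]
    intro x
    refine (hdiff f g x x.2).trans (le_of_eq ?_)
    push_cast
    ring
  let f := ContractingWith.fixedPoint Φ hcontr
  have hfix : Φ f = f := hcontr.fixedPoint_isFixedPt
  have hfix' : ∀ x ∈ Icc (0 : ℝ) T, ext f x = Ψ (ext f) x := by
    intro x hx
    have h1 : ext f x = f ⟨x, hx⟩ := IccExtend_of_mem h0T f hx
    rw [h1]
    conv_lhs => rw [← hfix]
    rfl
  have hfc := hextc f
  have hnorm : ‖f‖ ≤ 4 * κ := by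
    have : ‖f‖ ≤ 2 * κ + ‖f‖ / 2 := by
      rw [ContinuousMap.norm_le _ (by positivity)]
      intro x
      have h1 : f x = Ψ (ext f) x := by
        conv_lhs => rw [← hfix]
        rfl
      rw [h1, hΨe _ hfc]
      refine (norm_add_le _ _).trans (add_le_add ?_
        (hL (ext f) hfc ‖f‖ (norm_nonneg _) (fun x _ => hextb _ x) x x.2))
      rw [norm_mul]
      have := hK x x.2 c left_mem_uIcc
      simpa using this
    linarith
  refine ⟨Uf (ext f), Ψ (ext f), hUc _ hfc, hΨc _ hfc, ?_, fun x _ => hΨd _ hfc x, ?_, ?_⟩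
  · intro x hx
    rw [← hfix' x hx]
    exact hUd _ hfc x
  · intro x hx
    have : ‖∫ r in c..x, a r * ext f r‖ ≤ (A * (4 * κ)) * |x - c| := by
      refine intervalIntegral.norm_integral_le_of_norm_le_const fun t ht => ?_
      have ht' := hsub x hx (uIoc_subset_uIcc ht)
      rw [norm_mul]
      exact mul_le_mul (hA t ht') ((hextb f t).trans hnorm) (norm_nonneg _) hA0
    simp only [Uf, add_sub_cancel_left]
    refine this.trans ?_
    calc (A * (4 * κ)) * |x - c| ≤ (A * (4 * κ)) * T := by gcongr; exact hlen x hx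
      _ = _ := by ring
  · intro x hx
    rw [← hfix' x hx]
    exact (hextb f x).trans hnorm

lemma dk_system (T : ℝ) (hT : 0 < T) (a b : ℝ → ℂ) (ha : Continuous a)
    (b0 : ℂ) (h : ℝ → ℂ) (hh : Integrable h) (hb : ∀ x, b x = b0 + ∫ r in (0 : ℝ)..x, h r) :
    ∃ C > (0 : ℝ), ∃ R : ℝ, 1 ≤ R ∧ ∀ μ : ℂ, R ≤ ‖μ‖ →
    ∃ U V : ℝ → ℂ, Continuous U ∧ Continuous V ∧
      (∀ x ∈ Icc (0 : ℝ) T, HasDerivAt U (a x * V x) x) ∧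
      (∀ x ∈ Icc (0 : ℝ) T, HasDerivAt V (μ * V x + b x * U x) x) ∧
      (∀ x ∈ Icc (0 : ℝ) T, ‖U x - 2‖ ≤ C / ‖μ‖) ∧
      (∀ x ∈ Icc (0 : ℝ) T, ‖V x‖ ≤ C / ‖μ‖) := by
  obtain ⟨A', hA'⟩ := isCompact_Icc.exists_bound_of_continuousOn (s := Icc (0 : ℝ) T) ha.continuousOn
  set A := max A' 0
  have hA0 : 0 ≤ A := le_max_right _ _
  have hA : ∀ x ∈ Icc (0 : ℝ) T, ‖a x‖ ≤ A := fun x hx => (hA' x hx).trans (le_max_left _ _)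
  have hbc : Continuous b := by
    rw [funext hb]
    exact continuous_const.add
      (intervalIntegral.continuous_primitive (fun _ _ => hh.intervalIntegrable) 0)
  set M := 2 * ‖b0‖ + 3 * ∫ t, ‖h t‖ with hM
  have hM0 : 0 ≤ M := by
    have : 0 ≤ ∫ t, ‖h t‖ := integral_nonneg fun _ => norm_nonneg _
    positivity
  refine ⟨4 * M * A * T + 4 * M + 1, by positivity, 2 * M * A * T + 1, ?_, ?_⟩
  · have : 0 ≤ 2 * M * A * T := by positivity
    linarith
  intro μ hμR
  have hμpos : 0 < ‖μ‖ := by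
    have : 0 ≤ 2 * M * A * T := by positivity
    linarith
  have hμ : μ ≠ 0 := norm_pos_iff.1 hμpos
  have hmain : ∀ c ∈ Icc (0 : ℝ) T,
      (∀ x ∈ Icc (0 : ℝ) T, ∀ t ∈ uIcc c x, μ.re * (x - t) ≤ 0) →
      ∃ U V : ℝ → ℂ, Continuous U ∧ Continuous V ∧
      (∀ x ∈ Icc (0 : ℝ) T, HasDerivAt U (a x * V x) x) ∧
      (∀ x ∈ Icc (0 : ℝ) T, HasDerivAt V (μ * V x + b x * U x) x) ∧
      (∀ x ∈ Icc (0 : ℝ) T, ‖U x - 2‖ ≤ 4 * (M / ‖μ‖) * A * T) ∧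
      (∀ x ∈ Icc (0 : ℝ) T, ‖V x‖ ≤ 4 * (M / ‖μ‖)) := by
    intro c hc hE
    refine dk_core T hT a b ha hbc A (M / ‖μ‖) hA0 (by positivity) hA μ c hc ?_ ?_
    · intro x hx s hs
      have e : ∀ t, b t = b0 + ∫ r in (0 : ℝ)..t, h r := hb
      simp only [e]
      refine dk_kernel μ hμ b0 h hh s x fun t ht => ?_
      have ht' : t ∈ uIcc c x := uIcc_subset_uIcc hs right_mem_uIcc ht
      rw [Complex.norm_exp, Real.exp_le_one_iff]
      have := hE x hx t ht'
      simpa using this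
    · rw [div_mul_eq_mul_div, div_mul_eq_mul_div, div_le_iff₀ hμpos]
      linarith
  have hfin : ∃ c ∈ Icc (0 : ℝ) T, ∀ x ∈ Icc (0 : ℝ) T, ∀ t ∈ uIcc c x, μ.re * (x - t) ≤ 0 := by
    rcases le_total 0 μ.re with hre | hre
    · refine ⟨T, ⟨hT.le, le_rfl⟩, fun x hx t ht => ?_⟩
      rw [uIcc_of_ge hx.2] at ht
      exact mul_nonpos_of_nonneg_of_nonpos hre (by linarith [ht.1])
    · refine ⟨0, ⟨le_rfl, hT.le⟩, fun x hx t ht => ?_⟩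
      rw [uIcc_of_le hx.1] at ht
      exact mul_nonpos_of_nonpos_of_nonneg hre (by linarith [ht.2])
  obtain ⟨c, hc, hE⟩ := hfin
  obtain ⟨U, V, h1, h2, h3, h4, h5, h6⟩ := hmain c hc hE
  refine ⟨U, V, h1, h2, h3, h4, fun x hx => (h5 x hx).trans ?_, fun x hx => (h6 x hx).trans ?_⟩
  · rw [show 4 * (M / ‖μ‖) * A * T = (4 * M * A * T) / ‖μ‖ by ring]
    gcongr
    linarith
  · rw [show 4 * (M / ‖μ‖) = (4 * M) / ‖μ‖ by ring]
    gcongr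
    have : 0 ≤ 4 * M * A * T := by positivity
    linarith

lemma dk_extend (T : ℝ) (hT : 0 < T) (f : ℝ → ℂ) (hf : AbsContOn f T) :
    ∃ h : ℝ → ℂ, Integrable h ∧ ∀ x ∈ Icc (0 : ℝ) T, f x = f 0 + ∫ r in (0 : ℝ)..x, h r := by
  obtain ⟨g, hg, hfg⟩ := hf
  rw [intervalIntegrable_iff_integrableOn_Ioc_of_le hT.le] at hg
  refine ⟨(Ioc 0 T).indicator g, (integrable_indicator_iff measurableSet_Ioc).2 hg, fun x hx => ?_⟩
  rw [hfg x hx]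
  congr 1
  refine intervalIntegral.integral_congr_ae (Eventually.of_forall fun t ht => ?_)
  rw [uIoc_of_le hx.1] at ht
  rw [indicator_of_mem (show t ∈ Ioc 0 T from ⟨ht.1, ht.2.trans hx.2⟩)]

lemma dk_sol (T : ℝ) (p q P Q : ℝ → ℂ) (hP : Continuous P) (hQ : Continuous Q)
    (hpP : ∀ x ∈ Icc (0 : ℝ) T, p x = P x) (hqQ : ∀ x ∈ Icc (0 : ℝ) T, q x = Q x)
    (lam : ℂ) (u v : ℝ → ℂ) (hu : Continuous u) (hv : Continuous v)
    (hu' : ∀ x ∈ Icc (0 : ℝ) T,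
      HasDerivAt u (Complex.I * lam * u x + (Q x - Complex.I * P x) * v x) x)
    (hv' : ∀ x ∈ Icc (0 : ℝ) T,
      HasDerivAt v (-(Complex.I * lam) * v x + (Q x + Complex.I * P x) * u x) x) :
    IsDiracSol p q T lam (fun x => ((u x + v x) / 2, -Complex.I * (u x - v x) / 2)) := by
  have hI : Complex.I * Complex.I = -1 := Complex.I_mul_I
  refine ⟨by fun_prop, fun x hx => ?_⟩
  have hsub : uIcc 0 x ⊆ Icc 0 T := by
    rw [uIcc_of_le hx.1]; exact Icc_subset_Icc_right hx.2
  constructor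
  · have h1 : ∫ t in (0 : ℝ)..x, (q t * ((u t + v t) / 2) -
        (p t + lam) * (-Complex.I * (u t - v t) / 2)) =
        ∫ t in (0 : ℝ)..x, (Q t * ((u t + v t) / 2) -
        (P t + lam) * (-Complex.I * (u t - v t) / 2)) := by
      refine intervalIntegral.integral_congr fun t ht => ?_
      simp only [hpP t (hsub ht), hqQ t (hsub ht)]
    have h2 := intervalIntegral.integral_eq_sub_of_hasDerivAt (a := 0) (b := x)
      (f := fun x => (u x + v x) / 2)
      (f' := fun t => (Q t * ((u t + v t) / 2) - (P t + lam) * (-Complex.I * (u t - v t) / 2)))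
      (fun t ht => by
        refine HasDerivAt.congr_deriv (((hu' t (hsub ht)).add (hv' t (hsub ht))).div_const 2) ?_
        ring)
      (Continuous.intervalIntegrable (by fun_prop) _ _)
    simp only [h1, h2]
    ring
  · have h1 : ∫ t in (0 : ℝ)..x, ((lam - p t) * ((u t + v t) / 2) -
        q t * (-Complex.I * (u t - v t) / 2)) =
        ∫ t in (0 : ℝ)..x, ((lam - P t) * ((u t + v t) / 2) -
        Q t * (-Complex.I * (u t - v t) / 2)) := by
      refine intervalIntegral.integral_congr fun t ht => ?_
      simp only [hpP t (hsub ht), hqQ t (hsub ht)]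
    have h2 := intervalIntegral.integral_eq_sub_of_hasDerivAt (a := 0) (b := x)
      (f := fun x => -Complex.I * (u x - v x) / 2)
      (f' := fun t => ((lam - P t) * ((u t + v t) / 2) - Q t * (-Complex.I * (u t - v t) / 2)))
      (fun t ht => by
        refine HasDerivAt.congr_deriv ((((hu' t (hsub ht)).sub (hv' t (hsub ht))).const_mul (-Complex.I)).div_const 2) ?_
        linear_combination ((P t - lam) * (u t + v t) / 2) * hI)
      (Continuous.intervalIntegrable (by fun_prop) _ _)
    simp only [h1, h2]
    ring

lemma dk_mul_exp (σ : ℂ) (F : ℝ → ℂ) (F' : ℂ) (x : ℝ) (h : HasDerivAt F F' x) :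
    HasDerivAt (fun x : ℝ => Complex.exp (σ * (x : ℂ)) * F x)
      (σ * (Complex.exp (σ * (x : ℂ)) * F x) + Complex.exp (σ * (x : ℂ)) * F') x := by
  have h0 : HasDerivAt (fun t : ℝ => σ * (t : ℂ)) (σ * 1) x :=
    (Complex.ofRealCLM.hasDerivAt (x := x)).const_mul σ
  refine HasDerivAt.congr_deriv (h0.cexp.mul h) ?_
  ring

/-- **Existence of a Birkhoff-type fundamental system**: there are `C > 0` and `R ≥ 1` such
that for every `λ` with `|λ| ≥ R` (in particular in each closed half-plane `± Im λ ≥ 0`)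
there exist solutions `Y₁(·,λ), Y₂(·,λ)` of the Dirac system with
`‖e^{-iλx} Y₁(x,λ) - (1,-i)ᵀ‖ ≤ C/|λ|`, `‖e^{iλx} Y₂(x,λ) - (1,i)ᵀ‖ ≤ C/|λ|`, and
`|Y₁,₁ Y₂,₂ - Y₁,₂ Y₂,₁ - 2i| ≤ C/|λ|` on `[0,T]`. -/
theorem statement4
    (T : ℝ) (hT : 0 < T)
    (p q : ℝ → ℂ) (hp : AbsContOn p T) (hq : AbsContOn q T) :
    ∃ C > (0 : ℝ), ∃ R : ℝ, 1 ≤ R ∧ ∀ lam : ℂ, R ≤ ‖lam‖ →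
      ∃ Y₁ Y₂ : ℝ → ℂ × ℂ,
        IsDiracSol p q T lam Y₁ ∧ IsDiracSol p q T lam Y₂ ∧
        ∀ x ∈ Icc (0 : ℝ) T,
          ‖Complex.exp (-(Complex.I * lam * (x : ℂ))) • Y₁ x - ((1 : ℂ), -Complex.I)‖ ≤
            C / ‖lam‖ ∧
          ‖Complex.exp (Complex.I * lam * (x : ℂ)) • Y₂ x - ((1 : ℂ), Complex.I)‖ ≤
            C / ‖lam‖ ∧
          ‖(Y₁ x).1 * (Y₂ x).2 - (Y₁ x).2 * (Y₂ x).1 - 2 * Complex.I‖ ≤ C / ‖lam‖ := by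
  obtain ⟨hp', hpi, hpe⟩ := dk_extend T hT p hp
  obtain ⟨hq', hqi, hqe⟩ := dk_extend T hT q hq
  set P : ℝ → ℂ := fun x => p 0 + ∫ r in (0 : ℝ)..x, hp' r with hPdef
  set Q : ℝ → ℂ := fun x => q 0 + ∫ r in (0 : ℝ)..x, hq' r with hQdef
  have hPc : Continuous P := continuous_const.add
      (intervalIntegral.continuous_primitive (fun _ _ => hpi.intervalIntegrable) 0)
  have hQc : Continuous Q := continuous_const.add
      (intervalIntegral.continuous_primitive (fun _ _ => hqi.intervalIntegrable) 0)
  set a : ℝ → ℂ := fun x => Q x - Complex.I * P x with hadef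
  set b : ℝ → ℂ := fun x => Q x + Complex.I * P x with hbdef
  have hac : Continuous a := by fun_prop
  have hbc : Continuous b := by fun_prop
  have hae : ∀ x, a x = (q 0 - Complex.I * p 0) +
      ∫ r in (0 : ℝ)..x, (hq' r - Complex.I * hp' r) := by
    intro x
    rw [intervalIntegral.integral_sub hqi.intervalIntegrable
      (hpi.const_mul Complex.I).intervalIntegrable, intervalIntegral.integral_const_mul]
    simp only [hadef, hPdef, hQdef]
    ring
  have hbe : ∀ x, b x = (q 0 + Complex.I * p 0) +
      ∫ r in (0 : ℝ)..x, (hq' r + Complex.I * hp' r) := by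
    intro x
    rw [intervalIntegral.integral_add hqi.intervalIntegrable
      (hpi.const_mul Complex.I).intervalIntegrable, intervalIntegral.integral_const_mul]
    simp only [hbdef, hPdef, hQdef]
    ring
  obtain ⟨C₁, hC₁, R₁, hR₁, H₁⟩ := dk_system T hT a b hac _ _
    (hqi.add (hpi.const_mul Complex.I)) hbe
  obtain ⟨C₂, hC₂, R₂, hR₂, H₂⟩ := dk_system T hT b a hbc _ _
    (hqi.sub (hpi.const_mul Complex.I)) hae
  set C := C₁ + C₂ with hC
  have hCpos : 0 < C := by positivity
  refine ⟨C ^ 2 + 2 * C, by positivity, R₁ + R₂, by linarith, fun lam hlam => ?_⟩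
  have hl1 : 1 ≤ ‖lam‖ := by linarith
  have hl0 : 0 < ‖lam‖ := by linarith
  have hn1 : ‖-(2 * Complex.I * lam)‖ = 2 * ‖lam‖ := by simp
  have hn2 : ‖2 * Complex.I * lam‖ = 2 * ‖lam‖ := by simp
  obtain ⟨U₁, V₁, hU₁c, hV₁c, hU₁d, hV₁d, hU₁b, hV₁b⟩ := H₁ (-(2 * Complex.I * lam))
    (by rw [hn1]; linarith)
  obtain ⟨U₂, V₂, hU₂c, hV₂c, hU₂d, hV₂d, hU₂b, hV₂b⟩ := H₂ (2 * Complex.I * lam)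
    (by rw [hn2]; linarith)
  set ε := C / ‖lam‖ with hε
  have hε0 : 0 ≤ ε := by positivity
  have hε1 : C₁ / (2 * ‖lam‖) ≤ ε := by
    rw [hε]; gcongr <;> linarith
  have hε2 : C₂ / (2 * ‖lam‖) ≤ ε := by
    rw [hε]; gcongr <;> linarith
  have hεle : ε ≤ (C ^ 2 + 2 * C) / ‖lam‖ := by
    rw [hε]; gcongr; nlinarith
  have hεle2 : ε ^ 2 + 2 * ε ≤ (C ^ 2 + 2 * C) / ‖lam‖ := by
    have : ε ^ 2 ≤ C ^ 2 / ‖lam‖ := by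
      rw [hε, div_pow]
      gcongr
      nlinarith
    have e : (C ^ 2 + 2 * C) / ‖lam‖ = C ^ 2 / ‖lam‖ + 2 * ε := by rw [hε]; ring
    linarith
  set e₁ : ℝ → ℂ := fun x => Complex.exp (Complex.I * lam * (x : ℂ)) with he₁
  set e₂ : ℝ → ℂ := fun x => Complex.exp (-(Complex.I * lam) * (x : ℂ)) with he₂
  have he₁c : Continuous e₁ := by fun_prop
  have he₂c : Continuous e₂ := by fun_prop
  have hee : ∀ x, e₁ x * e₂ x = 1 := by
    intro x
    simp only [he₁, he₂]
    rw [← Complex.exp_add]; simp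
  refine ⟨fun x => ((e₁ x * U₁ x + e₁ x * V₁ x) / 2, -Complex.I * (e₁ x * U₁ x - e₁ x * V₁ x) / 2),
    fun x => ((e₂ x * V₂ x + e₂ x * U₂ x) / 2, -Complex.I * (e₂ x * V₂ x - e₂ x * U₂ x) / 2),
    ?_, ?_, ?_⟩
  · refine dk_sol T p q P Q hPc hQc hpe hqe lam (fun x => e₁ x * U₁ x) (fun x => e₁ x * V₁ x)
      (by fun_prop) (by fun_prop) (fun x hx => ?_) (fun x hx => ?_)
    · refine HasDerivAt.congr_deriv (dk_mul_exp (Complex.I * lam) U₁ _ x (hU₁d x hx)) ?_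
      simp only [he₁, hadef]; ring
    · refine HasDerivAt.congr_deriv (dk_mul_exp (Complex.I * lam) V₁ _ x (hV₁d x hx)) ?_
      simp only [he₁, hbdef]; ring
  · refine dk_sol T p q P Q hPc hQc hpe hqe lam (fun x => e₂ x * V₂ x) (fun x => e₂ x * U₂ x)
      (by fun_prop) (by fun_prop) (fun x hx => ?_) (fun x hx => ?_)
    · refine HasDerivAt.congr_deriv (dk_mul_exp (-(Complex.I * lam)) V₂ _ x (hV₂d x hx)) ?_
      simp only [he₂, hadef]; ring
    · refine HasDerivAt.congr_deriv (dk_mul_exp (-(Complex.I * lam)) U₂ _ x (hU₂d x hx)) ?_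
      simp only [he₂, hbdef]; ring
  intro x hx
  have u1 : ‖U₁ x - 2‖ ≤ ε := (hU₁b x hx).trans (by rw [hn1]; exact hε1)
  have v1 : ‖V₁ x‖ ≤ ε := (hV₁b x hx).trans (by rw [hn1]; exact hε1)
  have u2 : ‖U₂ x - 2‖ ≤ ε := (hU₂b x hx).trans (by rw [hn2]; exact hε2)
  have v2 : ‖V₂ x‖ ≤ ε := (hV₂b x hx).trans (by rw [hn2]; exact hε2)
  have hex : Complex.exp (-(Complex.I * lam * (x : ℂ))) = e₂ x := by
    simp only [he₂]; congr 1; ring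
  have hex' : Complex.exp (Complex.I * lam * (x : ℂ)) = e₁ x := rfl
  have hx1 := hee x
  have half : ∀ z w : ℂ, ‖z‖ ≤ ε → ‖w‖ ≤ ε → ‖(z + w) / 2‖ ≤ ε := by
    intro z w hz hw
    rw [norm_div, Complex.norm_ofNat, div_le_iff₀ two_pos]
    exact (norm_add_le _ _).trans (by linarith)
  have half' : ∀ z w : ℂ, ‖z‖ ≤ ε → ‖w‖ ≤ ε → ‖Complex.I * ((z + w) / 2)‖ ≤ ε := by
    intro z w hz hw
    rw [norm_mul, Complex.norm_I, one_mul]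
    exact half z w hz hw
  refine ⟨?_, ?_, ?_⟩
  · refine le_trans ?_ hεle
    rw [hex, Prod.norm_def]
    refine max_le ?_ ?_
    · refine le_of_eq_of_le (congrArg norm ?_) (half _ _ u1 v1)
      simp only [Prod.fst_sub, Prod.smul_fst, smul_eq_mul]
      linear_combination ((U₁ x + V₁ x) / 2) * hx1
    · refine le_of_eq_of_le (congrArg norm ?_) (half' (-(U₁ x - 2)) (V₁ x) (by rwa [norm_neg]) v1)
      simp only [Prod.snd_sub, Prod.smul_snd, smul_eq_mul]
      linear_combination (-Complex.I * (U₁ x - V₁ x) / 2) * hx1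
  · refine le_trans ?_ hεle
    rw [hex', Prod.norm_def]
    refine max_le ?_ ?_
    · refine le_of_eq_of_le (congrArg norm ?_) (half _ _ u2 v2)
      simp only [Prod.fst_sub, Prod.smul_fst, smul_eq_mul]
      linear_combination ((V₂ x + U₂ x) / 2) * hx1
    · refine le_of_eq_of_le (congrArg norm ?_) (half' (U₂ x - 2) (-V₂ x) u2 (by rwa [norm_neg]))
      simp only [Prod.snd_sub, Prod.smul_snd, smul_eq_mul]
      linear_combination (-Complex.I * (V₂ x - U₂ x) / 2) * hx1
  · refine le_trans ?_ hεle2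
    have e : (e₁ x * U₁ x + e₁ x * V₁ x) / 2 * (-Complex.I * (e₂ x * V₂ x - e₂ x * U₂ x) / 2) -
        -Complex.I * (e₁ x * U₁ x - e₁ x * V₁ x) / 2 * ((e₂ x * V₂ x + e₂ x * U₂ x) / 2) -
        2 * Complex.I =
        Complex.I * (((U₁ x - 2) * (U₂ x - 2) + 2 * (U₁ x - 2) + 2 * (U₂ x - 2) -
          V₁ x * V₂ x) / 2) := by
      linear_combination (Complex.I * (U₁ x * U₂ x - V₁ x * V₂ x) / 2) * hx1
    simp only [e]
    rw [norm_mul, Complex.norm_I, one_mul, norm_div, Complex.norm_ofNat, div_le_iff₀ two_pos]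
    have t1 : ‖(U₁ x - 2) * (U₂ x - 2)‖ ≤ ε * ε := by
      rw [norm_mul]; gcongr
    have t2 : ‖V₁ x * V₂ x‖ ≤ ε * ε := by
      rw [norm_mul]; gcongr
    have t3 : ‖2 * (U₁ x - 2)‖ ≤ 2 * ε := by
      rw [norm_mul, Complex.norm_ofNat]; gcongr
    have t4 : ‖2 * (U₂ x - 2)‖ ≤ 2 * ε := by
      rw [norm_mul, Complex.norm_ofNat]; gcongr
    have s1 := norm_sub_le ((U₁ x - 2) * (U₂ x - 2) + 2 * (U₁ x - 2) + 2 * (U₂ x - 2))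
      (V₁ x * V₂ x)
    have s2 := norm_add_le ((U₁ x - 2) * (U₂ x - 2) + 2 * (U₁ x - 2)) (2 * (U₂ x - 2))
    have s3 := norm_add_le ((U₁ x - 2) * (U₂ x - 2)) (2 * (U₁ x - 2))
    nlinarith
end
end

section
/- Second representation of the Weyl solution (equation (12)): Let λ ∈ ℂ with Δ₁(λ) ≠ 0 and ω(λ) ≠ 0. Then for all x ∈ [0,T]: Φ(x,λ) = (θ(x,λ) + (Δ₂(λ)/Δ₁(λ)) φ(x,λ)) / ω(λ), where φ(·,λ) := U₁(X₁(·,λ))X₂(·,λ) − U₁(X₂(·,λ))X₁(·,λ) and θ(·,λ) := U₂(X₂(·,λ))X₁(·,λ) − U₂(X₁(·,λ))X₂(·,λ). -/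
open MeasureTheory Set Filter

noncomputable section

lemma AbsContOn.cont {f : ℝ → ℂ} {T : ℝ} (hT : 0 < T) (h : AbsContOn f T) :
    ContinuousOn f (Icc 0 T) := by
  obtain ⟨g, hg, hf⟩ := h
  have h1 : ContinuousOn (fun x => f 0 + ∫ t in (0 : ℝ)..x, g t) (Icc 0 T) := by
    refine continuousOn_const.add ?_
    have := intervalIntegral.continuousOn_primitive_interval' hg left_mem_uIcc
    rwa [uIcc_of_le hT.le] at this
  exact h1.congr hf

lemma hasDeriv_prim {f F : ℝ → ℂ} {T : ℝ} (hf : ContinuousOn f (Icc 0 T))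
    (hF : ∀ x ∈ Icc (0 : ℝ) T, F x = F 0 + ∫ t in (0 : ℝ)..x, f t) {t : ℝ}
    (ht : t ∈ Ico (0 : ℝ) T) : HasDerivWithinAt F (f t) (Ici t) t := by
  have ht' : t ∈ Icc (0 : ℝ) T := Ico_subset_Icc_self ht
  have : Fact (t ∈ Icc (0 : ℝ) T) := ⟨ht'⟩
  have hi : IntervalIntegrable f volume 0 t := by
    apply ContinuousOn.intervalIntegrable
    rw [uIcc_of_le ht.1]
    exact hf.mono (Icc_subset_Icc_right ht.2.le)
  have h1 : HasDerivWithinAt (fun u => ∫ s in (0 : ℝ)..u, f s) (f t) (Icc 0 T) t :=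
    intervalIntegral.integral_hasDerivWithinAt_right hi
      (hf.stronglyMeasurableAtFilter_nhdsWithin measurableSet_Icc t) (hf t ht')
  have h2 : HasDerivWithinAt F (f t) (Icc 0 T) t :=
    (h1.const_add (F 0)).congr hF (hF t ht')
  refine h2.mono_of_mem_nhdsWithin ?_
  exact mem_of_superset (Icc_mem_nhdsGE ht.2) (Icc_subset_Icc_left ht.1)

/-- The right-hand side of the Dirac system. -/
def diracRHS (p q : ℝ → ℂ) (lam : ℂ) (t : ℝ) (z : ℂ × ℂ) : ℂ × ℂ :=
  (q t * z.1 - (p t + lam) * z.2, (lam - p t) * z.1 - q t * z.2)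

lemma IsDiracSol.deriv {p q : ℝ → ℂ} {T : ℝ} {lam : ℂ} {y : ℝ → ℂ × ℂ}
    (hp : ContinuousOn p (Icc 0 T)) (hq : ContinuousOn q (Icc 0 T))
    (h : IsDiracSol p q T lam y) {t : ℝ} (ht : t ∈ Ico (0 : ℝ) T) :
    HasDerivWithinAt y (diracRHS p q lam t (y t)) (Ici t) t := by
  obtain ⟨hc, hy⟩ := h
  have c1 : ContinuousOn (fun t => (y t).1) (Icc 0 T) := continuous_fst.comp_continuousOn hc
  have c2 : ContinuousOn (fun t => (y t).2) (Icc 0 T) := continuous_snd.comp_continuousOn hc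
  have d1 := hasDeriv_prim (F := fun t => (y t).1)
    ((hq.mul c1).sub ((hp.add continuousOn_const).mul c2)) (fun x hx => (hy x hx).1) ht
  have d2 := hasDeriv_prim (F := fun t => (y t).2)
    (((continuousOn_const (c := lam)).sub hp).mul c1 |>.sub (hq.mul c2)) (fun x hx => (hy x hx).2) ht
  exact d1.prodMk d2

lemma IsDiracSol.eq_comb {p q : ℝ → ℂ} {T : ℝ} {lam : ℂ} {y X₁ X₂ : ℝ → ℂ × ℂ}
    (hp : ContinuousOn p (Icc 0 T)) (hq : ContinuousOn q (Icc 0 T))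
    (h : IsDiracSol p q T lam y) (h1 : IsDiracSol p q T lam X₁) (h2 : IsDiracSol p q T lam X₂)
    (e1 : X₁ 0 = (1, 0)) (e2 : X₂ 0 = (0, 1)) :
    ∀ x ∈ Icc (0 : ℝ) T, y x = (y 0).1 • X₁ x + (y 0).2 • X₂ x := by
  obtain ⟨P, hP⟩ := isCompact_Icc.exists_bound_of_continuousOn hp
  obtain ⟨Q, hQ⟩ := isCompact_Icc.exists_bound_of_continuousOn hq
  have hcc : ContinuousOn (fun x => (y 0).1 • X₁ x + (y 0).2 • X₂ x) (Icc 0 T) :=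
    ContinuousOn.add (ContinuousOn.const_smul h1.1 (y 0).1) (ContinuousOn.const_smul h2.1 (y 0).2)
  have key : EqOn y (fun x => (y 0).1 • X₁ x + (y 0).2 • X₂ x) (Icc 0 T) := by
    refine ODE_solution_unique_of_mem_Icc_right (v := diracRHS p q lam) (s := fun _ => univ)
      (K := Real.toNNReal (Q + P + ‖lam‖)) ?_ h.1 (fun t ht => h.deriv hp hq ht)
      (fun _ _ => mem_univ _) hcc ?_
      (fun _ _ => mem_univ _) ?_
    · intro t ht
      have ht' := Ico_subset_Icc_self ht
      have hPt := hP t ht'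
      have hQt := hQ t ht'
      refine LipschitzOnWith.of_dist_le_mul fun a _ b _ => ?_
      have hQ0 := (norm_nonneg _).trans hQt
      have hP0 := (norm_nonneg _).trans hPt
      rw [Real.coe_toNNReal _ (by positivity), dist_eq_norm, dist_eq_norm]
      have n1 : ‖a.1 - b.1‖ ≤ ‖a - b‖ := norm_fst_le (a - b)
      have n2 : ‖a.2 - b.2‖ ≤ ‖a - b‖ := norm_snd_le (a - b)
      have bd : ∀ u v w z : ℂ, ‖u‖ ≤ Q → ‖v‖ ≤ P + ‖lam‖ → ‖w‖ ≤ ‖a - b‖ → ‖z‖ ≤ ‖a - b‖ →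
          ‖u * w + v * z‖ ≤ (Q + P + ‖lam‖) * ‖a - b‖ := by
        intro u v w z hu hv hw hz
        calc ‖u * w + v * z‖ ≤ ‖u‖ * ‖w‖ + ‖v‖ * ‖z‖ := by
              simpa using norm_add_le (u * w) (v * z)
          _ ≤ Q * ‖a - b‖ + (P + ‖lam‖) * ‖a - b‖ := by gcongr
          _ = _ := by ring
      refine max_le ?_ ?_
      · have := bd (q t) (-(p t + lam)) (a.1 - b.1) (a.2 - b.2) hQt
          (by rw [norm_neg]; exact (norm_add_le _ _).trans (by gcongr)) n1 n2
        change ‖(q t * a.1 - (p t + lam) * a.2) - (q t * b.1 - (p t + lam) * b.2)‖ ≤ _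
        refine le_of_eq_of_le (congrArg norm ?_) this
        ring
      · have := bd (-q t) (lam - p t) (a.2 - b.2) (a.1 - b.1) (by rwa [norm_neg])
          ((norm_sub_le _ _).trans (by linarith)) n2 n1
        change ‖((lam - p t) * a.1 - q t * a.2) - ((lam - p t) * b.1 - q t * b.2)‖ ≤ _
        refine le_of_eq_of_le (congrArg norm ?_) this
        ring
    · intro t ht
      have := ((h1.deriv hp hq ht).const_smul (y 0).1).add ((h2.deriv hp hq ht).const_smul (y 0).2)
      have e : diracRHS p q lam t ((y 0).1 • X₁ t + (y 0).2 • X₂ t) =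
          (y 0).1 • diracRHS p q lam t (X₁ t) + (y 0).2 • diracRHS p q lam t (X₂ t) := by
        apply Prod.ext
        · simp only [diracRHS, Prod.fst_add, Prod.snd_add, Prod.smul_fst, Prod.smul_snd,
            smul_eq_mul]
          ring
        · simp only [diracRHS, Prod.fst_add, Prod.snd_add, Prod.smul_fst, Prod.smul_snd,
            smul_eq_mul]
          ring
      rw [← e] at this
      exact this
    · simp [e1, e2]
  exact key

lemma app_comb {T : ℝ} (U : NonlocalForm T) {y X₁ X₂ : ℝ → ℂ × ℂ} (a b : ℂ)
    (h1 : ContinuousOn X₁ (Icc 0 T)) (h2 : ContinuousOn X₂ (Icc 0 T))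
    (h : ∀ x ∈ Icc (0 : ℝ) T, y x = a • X₁ x + b • X₂ x) :
    U.app y = a * U.app X₁ + b * U.app X₂ := by
  have := U.finite₁
  have := U.finite₂
  have aux : ∀ (μ : Measure ℝ) (w : ℝ → ℂ) (f g k : ℝ → ℂ), Integrable w μ →
      ContinuousOn f (Icc 0 T) → ContinuousOn g (Icc 0 T) →
      (∀ x ∈ Icc (0 : ℝ) T, k x = a * f x + b * g x) →
      ∫ t in Icc (0 : ℝ) T, w t * k t ∂μ = a * (∫ t in Icc (0 : ℝ) T, w t * f t ∂μ)
        + b * ∫ t in Icc (0 : ℝ) T, w t * g t ∂μ := by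
    intro μ w f g k hw hf hg hk
    have I : ∀ f : ℝ → ℂ, ContinuousOn f (Icc 0 T) →
        IntegrableOn (fun t => w t * f t) (Icc 0 T) μ := fun f hf =>
      hw.integrableOn.mul_continuousOn hf isCompact_Icc
    rw [← integral_const_mul, ← integral_const_mul,
      ← integral_add ((I f hf).const_mul a) ((I g hg).const_mul b)]
    refine setIntegral_congr_fun measurableSet_Icc fun t ht => ?_
    simp only [hk t ht]; ring
  unfold NonlocalForm.app
  rw [aux U.μ₁ U.w₁ (fun t => (X₁ t).1) (fun t => (X₂ t).1) (fun t => (y t).1) U.int₁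
      (continuous_fst.comp_continuousOn h1) (continuous_fst.comp_continuousOn h2)
      (fun x hx => by simp [h x hx]),
    aux U.μ₂ U.w₂ (fun t => (X₁ t).2) (fun t => (X₂ t).2) (fun t => (y t).2) U.int₂
      (continuous_snd.comp_continuousOn h1) (continuous_snd.comp_continuousOn h2)
      (fun x hx => by simp [h x hx])]
  ring

/-- **Equation (12)**: if `Δ₁(λ) ≠ 0` and `ω(λ) ≠ 0`, then on `[0,T]`
`Φ(x,λ) = (θ(x,λ) + (Δ₂(λ)/Δ₁(λ)) φ(x,λ)) / ω(λ)`, where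
`φ = U₁(X₁) X₂ - U₁(X₂) X₁` and `θ = U₂(X₂) X₁ - U₂(X₁) X₂`. -/
theorem statement11
    (T : ℝ) (hT : 0 < T)
    (p q : ℝ → ℂ) (hp : AbsContOn p T) (hq : AbsContOn q T)
    (U₁ U₂ : NonlocalForm T)
    (lam : ℂ)
    (X₁ X₂ : ℝ → ℂ × ℂ)
    (hX₁ : IsDiracSol p q T lam X₁ ∧ X₁ 0 = (1, 0))
    (hX₂ : IsDiracSol p q T lam X₂ ∧ X₂ 0 = (0, 1))
    (φ θ : ℝ → ℂ × ℂ)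
    (hφ : ∀ x, φ x = U₁.app X₁ • X₂ x - U₁.app X₂ • X₁ x)
    (hθ : ∀ x, θ x = U₂.app X₂ • X₁ x - U₂.app X₁ • X₂ x)
    (ω Δ₁ Δ₂ : ℂ)
    (hωdef : ω = U₁.app X₁ * U₂.app X₂ - U₁.app X₂ * U₂.app X₁)
    (hΔ₁def : Δ₁ = U₁.app X₁ * (X₂ T).1 - U₁.app X₂ * (X₁ T).1)
    (hΔ₂def : Δ₂ = U₂.app X₁ * (X₂ T).1 - U₂.app X₂ * (X₁ T).1)
    (hΔ₁ : Δ₁ ≠ 0) (hω : ω ≠ 0) :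
    ∀ Φ : ℝ → ℂ × ℂ, IsDiracSol p q T lam Φ → U₁.app Φ = 1 → (Φ T).1 = 0 →
      ∀ x ∈ Icc (0 : ℝ) T, Φ x = ω⁻¹ • (θ x + (Δ₂ / Δ₁) • φ x) := by
  intro Φ hΦ hU hΦT x hx
  have hp' := hp.cont hT
  have hq' := hq.cont hT
  have hc := hΦ.eq_comb hp' hq' hX₁.1 hX₂.1 hX₁.2 hX₂.2
  have hu := app_comb U₁ _ _ hX₁.1.1 hX₂.1.1 hc
  have hT' := congrArg Prod.fst (hc T ⟨hT.le, le_rfl⟩)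
  rw [hU] at hu
  rw [hΦT] at hT'
  simp only [Prod.fst_add, Prod.smul_fst, smul_eq_mul] at hT'
  rw [hc x hx, hφ, hθ]
  generalize (Φ 0).1 = a at *
  generalize (Φ 0).2 = b at *
  have ha : a * Δ₁ = (X₂ T).1 := by
    rw [hΔ₁def]; linear_combination (U₁.app X₂) * hT' - (X₂ T).1 * hu
  have hb : b * Δ₁ = -(X₁ T).1 := by
    rw [hΔ₁def]; linear_combination (X₁ T).1 * hu - (U₁.app X₁) * hT'
  have ca : a = ω⁻¹ * (U₂.app X₂ - Δ₂ / Δ₁ * U₁.app X₂) := by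
    field_simp
    rw [hΔ₂def]
    linear_combination ω * ha + (X₂ T).1 * hωdef - U₂.app X₂ * hΔ₁def
  have cb : b = ω⁻¹ * (-U₂.app X₁ + Δ₂ / Δ₁ * U₁.app X₁) := by
    field_simp
    rw [hΔ₂def]
    linear_combination ω * hb - (X₁ T).1 * hωdef + U₂.app X₁ * hΔ₁def
  rw [ca, cb]
  module
end
end

section
/- Asymptotics of the backward solution in a sector (Lemma 2, equation (18)): Fix δ ∈ (0, π/2) and x ∈ [0,T). There exist C > 0 and R ≥ 1 such that for all λ with arg λ ∈ [δ, π−δ] and |λ| ≥ R: ‖2 e^{iλ(T−x)} Z₁(x,λ) − (1, −i)ᵀ‖ ≤ C/|λ|. -/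
open MeasureTheory Set Filter

noncomputable section

theorem aux_ftc {f f' : ℝ → ℂ} {g g' : ℝ → ℝ} {a b : ℝ} (hab : a ≤ b)
    (hf : ContinuousOn f (Icc a b)) (hd : ∀ t ∈ Ioo a b, HasDerivAt f (f' t) t)
    (hf' : ContinuousOn f' (Icc a b))
    (hg : ∀ t, HasDerivAt g (g' t) t) (hg' : Continuous g')
    (hle : ∀ t ∈ Icc a b, ‖f' t‖ ≤ g' t) : ‖f b - f a‖ ≤ g b - g a := by
  have h1 := intervalIntegral.integral_eq_sub_of_hasDerivAt_of_le hab hf hd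
    (hf'.intervalIntegrable_of_Icc hab)
  have h2 := intervalIntegral.integral_eq_sub_of_hasDerivAt (f := g) (f' := g') (a := a) (b := b)
    (fun t _ => hg t) (hg'.intervalIntegrable a b)
  rw [← h1, ← h2]
  apply intervalIntegral.norm_integral_le_of_norm_le hab _ (hg'.intervalIntegrable a b)
  exact Filter.Eventually.of_forall (fun t ht => hle t ⟨ht.1.le, ht.2⟩)

theorem aux_cont {p : ℝ → ℂ} {T : ℝ} (hT : 0 < T) (hp : AbsContOn p T) :
    ContinuousOn p (Icc 0 T) := by
  obtain ⟨g, hg, h⟩ := hp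
  have h1 : ContinuousOn (fun x => ∫ t in (0 : ℝ)..x, g t) (Icc 0 T) := by
    have := intervalIntegral.continuousOn_primitive_interval' hg (left_mem_uIcc)
    rwa [uIcc_of_le hT.le] at this
  exact (continuousOn_const.add h1).congr h

theorem aux_deriv {f h : ℝ → ℂ} {T : ℝ} (hT : 0 < T) (hh : ContinuousOn h (Icc 0 T))
    (hf : ∀ x ∈ Icc (0 : ℝ) T, f x = f 0 + ∫ t in (0 : ℝ)..x, h t) :
    ∀ t ∈ Ioo 0 T, HasDerivAt f (h t) t := by
  intro t ht
  have hn : Icc 0 T ∈ nhds t := Icc_mem_nhds ht.1 ht.2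
  have h1 : HasDerivAt (fun x => ∫ s in (0 : ℝ)..x, h s) (h t) t := by
    apply intervalIntegral.integral_hasDerivAt_right
    · exact (hh.mono (Icc_subset_Icc_right ht.2.le)).intervalIntegrable_of_Icc ht.1.le
    · exact (hh.mono Ioo_subset_Icc_self).stronglyMeasurableAtFilter isOpen_Ioo t ht
    · exact hh.continuousAt hn
  refine (h1.const_add (f 0)).congr_of_eventuallyEq ?_
  filter_upwards [hn] with s hs using hf s hs

theorem aux_main_s16 {T : ℝ} (hT : 0 < T) {p q : ℝ → ℂ} {lam : ℂ} {M : ℝ} (hM : 0 < M)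
    (hp : ContinuousOn p (Icc 0 T)) (hq : ContinuousOn q (Icc 0 T))
    (hb : ∀ t ∈ Icc 0 T, ‖p t‖ + ‖q t‖ ≤ M) {y : ℝ → ℂ × ℂ}
    (hy : IsDiracSol p q T lam y) (hyT : y T = (1, 0))
    (hs : M + T * M ^ 2 ≤ lam.im) :
    ∀ x ∈ Icc 0 T,
     ‖Complex.exp (Complex.I * lam * ((T - x : ℝ) : ℂ)) * ((y x).1 + Complex.I * (y x).2) - 1‖
        ≤ M * (1 + 3 * T * M) / (2 * lam.im) ∧
     ‖Complex.exp (Complex.I * lam * ((T - x : ℝ) : ℂ)) * ((y x).1 - Complex.I * (y x).2)‖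
        ≤ Real.exp (-(2 * lam.im * (T - x))) + 3 * M / (2 * lam.im) := by
  obtain ⟨hyc, hyi⟩ := hy
  set σ := lam.im with hσdef
  have hσ : 0 < σ := by nlinarith [mul_pos hT (pow_pos hM 2)]
  have hII : Complex.I * Complex.I = -1 := Complex.I_mul_I
  have c1 : ContinuousOn (fun t => (y t).1) (Icc 0 T) := hyc.fst
  have c2 : ContinuousOn (fun t => (y t).2) (Icc 0 T) := hyc.snd
  have d1 := aux_deriv (f := fun t => (y t).1) hT
    (h := fun t => (q t * (y t).1 - (p t + lam) * (y t).2)) (by fun_prop) (fun x hx => (hyi x hx).1)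
  have d2 := aux_deriv (f := fun t => (y t).2) hT
    (h := fun t => ((lam - p t) * (y t).1 - q t * (y t).2)) (by fun_prop) (fun x hx => (hyi x hx).2)
  set E : ℝ → ℂ := fun t => Complex.exp (Complex.I * lam * ((T - t : ℝ) : ℂ)) with hE
  have cE : Continuous E := by
    simp only [hE]; fun_prop
  have dE : ∀ t, HasDerivAt E (-(Complex.I * lam) * E t) t := by
    intro t
    have h1 : HasDerivAt (fun t : ℝ => ((T - t : ℝ) : ℂ)) (-1 : ℂ) t := by
      have := ((hasDerivAt_id t).const_sub T).ofReal_comp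
      simpa using this
    have := (h1.const_mul (Complex.I * lam)).cexp
    refine HasDerivAt.congr_deriv this (Eq.symm ?_)
    simp only [hE]; ring
  set U : ℝ → ℂ := fun t => E t * ((y t).1 + Complex.I * (y t).2) with hU
  set V : ℝ → ℂ := fun t => E t * ((y t).1 - Complex.I * (y t).2) with hV
  have cU : ContinuousOn U (Icc 0 T) := by
    simp only [hU]; have := cE.continuousOn (s := Icc 0 T); fun_prop
  have cV : ContinuousOn V (Icc 0 T) := by
    simp only [hV]; have := cE.continuousOn (s := Icc 0 T); fun_prop
  have dU : ∀ t ∈ Ioo 0 T, HasDerivAt U ((q t - Complex.I * p t) * V t) t := by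
    intro t ht
    have := (dE t).mul ((d1 t ht).add ((d2 t ht).const_mul Complex.I))
    refine HasDerivAt.congr_deriv this (Eq.symm ?_)
    simp only [hV, Pi.add_apply]
    linear_combination (E t * p t * (y t).2 + E t * lam * (y t).2) * hII
  have dV : ∀ t ∈ Ioo 0 T, HasDerivAt V (-(2 * Complex.I * lam) * V t
      + (q t + Complex.I * p t) * U t) t := by
    intro t ht
    have := (dE t).mul ((d1 t ht).sub ((d2 t ht).const_mul Complex.I))
    refine HasDerivAt.congr_deriv this (Eq.symm ?_)
    simp only [hV, hU, Pi.sub_apply]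
    linear_combination (E t * p t * (y t).2 + E t * lam * (y t).2) * hII
  have UT : U T = 1 := by simp [hU, hE, hyT]
  have VT : V T = 1 := by simp [hV, hE, hyT]
  have ba : ∀ t ∈ Icc 0 T, ‖q t - Complex.I * p t‖ ≤ M := by
    intro t ht
    have := norm_sub_le (q t) (Complex.I * p t)
    rw [norm_mul, Complex.norm_I, one_mul] at this
    linarith [hb t ht]
  have bb : ∀ t ∈ Icc 0 T, ‖q t + Complex.I * p t‖ ≤ M := by
    intro t ht
    have := norm_add_le (q t) (Complex.I * p t)
    rw [norm_mul, Complex.norm_I, one_mul] at this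
    linarith [hb t ht]
  obtain ⟨x0, hx0, hmax⟩ := isCompact_Icc.exists_isMaxOn (nonempty_Icc.2 hT.le) cU.norm
  set S := ‖U x0‖ with hS
  have hUS : ∀ t ∈ Icc 0 T, ‖U t‖ ≤ S := fun t ht => hmax ht
  have hS0 : 0 ≤ S := norm_nonneg _
  -- the kernel
  have nF : ∀ x t : ℝ, ‖Complex.exp (2 * Complex.I * lam * ((t - x : ℝ) : ℂ))‖
      = Real.exp (-(2 * σ * (t - x))) := by
    intro x t
    rw [Complex.norm_exp]
    congr 1
    simp [hσdef]
  have bV : ∀ x ∈ Icc 0 T, ‖V x‖ ≤ Real.exp (-(2 * σ * (T - x))) + S * M / (2 * σ) := by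
    intro x hx
    set F : ℝ → ℂ := fun t => Complex.exp (2 * Complex.I * lam * ((t - x : ℝ) : ℂ)) with hF
    have cF : Continuous F := by simp only [hF]; fun_prop
    have dF : ∀ t, HasDerivAt F (2 * Complex.I * lam * F t) t := by
      intro t
      have h1 : HasDerivAt (fun t : ℝ => ((t - x : ℝ) : ℂ)) (1 : ℂ) t := by
        have := ((hasDerivAt_id t).sub_const x).ofReal_comp
        simpa using this
      have := (h1.const_mul (2 * Complex.I * lam)).cexp
      refine HasDerivAt.congr_deriv this (Eq.symm ?_)
      simp only [hF]; ring
    have hsub : Icc x T ⊆ Icc 0 T := Icc_subset_Icc_left hx.1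
    have cF' := cF.continuousOn (s := Icc x T)
    have cU' := cU.mono hsub
    have cV' := cV.mono hsub
    have cp' := hp.mono hsub
    have cq' := hq.mono hsub
    have key := aux_ftc (f := fun t => F t * V t)
      (f' := fun t => F t * ((q t + Complex.I * p t) * U t))
      (g := fun t => -(S * M / (2 * σ)) * Real.exp (-(2 * σ * (t - x))))
      (g' := fun t => S * M * Real.exp (-(2 * σ * (t - x)))) hx.2
      (by fun_prop)
      (by
        intro t ht
        have := (dF t).mul (dV t ⟨lt_of_le_of_lt hx.1 ht.1, ht.2⟩)
        refine HasDerivAt.congr_deriv this (Eq.symm ?_)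
        ring)
      (by fun_prop)
      (by
        intro t
        have h1 : HasDerivAt (fun t : ℝ => -(2 * σ * (t - x))) (-(2 * σ)) t := by
          have := (((hasDerivAt_id t).sub_const x).const_mul (2 * σ)).neg
          exact HasDerivAt.congr_deriv this (by simp)
        have := (h1.exp).const_mul (-(S * M / (2 * σ)))
        refine HasDerivAt.congr_deriv this (Eq.symm ?_)
        field_simp)
      (by fun_prop)
      (by
        intro t ht
        rw [norm_mul, norm_mul, nF x t, mul_comm]
        have := mul_le_mul (bb t (hsub ht)) (hUS t (hsub ht)) (norm_nonneg _) hM.le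
        rw [mul_comm S M]
        exact mul_le_mul_of_nonneg_right this (Real.exp_pos _).le)
    have hFx : F x = 1 := by simp [hF]
    simp only [hFx, VT, one_mul, mul_one, sub_self, mul_zero, neg_zero, Real.exp_zero] at key
    have h3 : ‖V x‖ ≤ ‖F T‖ + ‖F T - V x‖ := by
      have := norm_sub_le (F T) (F T - V x)
      simpa using this
    have h4 : 0 ≤ S * M / (2 * σ) * Real.exp (-(2 * σ * (T - x))) := by positivity
    have h5 := nF x T
    simp only [hF] at h3 key
    linarith
  have bU : ∀ x ∈ Icc 0 T, ‖U x - 1‖ ≤ M * (1 + S * T * M) / (2 * σ) := by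
    intro x hx
    have hsub : Icc x T ⊆ Icc 0 T := Icc_subset_Icc_left hx.1
    have cU' := cU.mono hsub
    have cV' := cV.mono hsub
    have cp' := hp.mono hsub
    have cq' := hq.mono hsub
    have key := aux_ftc (f := U)
      (f' := fun t => ((q t - Complex.I * p t) * V t))
      (g := fun t => M * (Real.exp (-(2 * σ * (T - t))) / (2 * σ) + S * M / (2 * σ) * t))
      (g' := fun t => M * (Real.exp (-(2 * σ * (T - t))) + S * M / (2 * σ))) hx.2
      cU'
      (by
        intro t ht
        exact (dU t ⟨lt_of_le_of_lt hx.1 ht.1, ht.2⟩))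
      (by fun_prop)
      (by
        intro t
        have h1 : HasDerivAt (fun t : ℝ => -(2 * σ * (T - t))) (2 * σ) t := by
          have := (((hasDerivAt_id t).const_sub T).const_mul (2 * σ)).neg
          exact HasDerivAt.congr_deriv this (by simp)
        have := (((h1.exp).div_const (2 * σ)).add
          ((hasDerivAt_id t).const_mul (S * M / (2 * σ)))).const_mul M
        refine HasDerivAt.congr_deriv this (Eq.symm ?_)
        field_simp)
      (by fun_prop)
      (by
        intro t ht
        rw [norm_mul]
        exact mul_le_mul (ba t (hsub ht)) (bV t (hsub ht)) (norm_nonneg _) hM.le)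
    rw [UT, norm_sub_rev] at key
    refine key.trans ?_
    simp only [sub_self, mul_zero, neg_zero, Real.exp_zero]
    have h1 : 0 ≤ M * (Real.exp (-(2 * σ * (T - x))) / (2 * σ) + S * M / (2 * σ) * x) := by
      have := hx.1
      positivity
    have h2 : M * (1 + S * T * M) / (2 * σ) = M * (1 / (2 * σ) + S * M / (2 * σ) * T) := by
      field_simp
    linarith
  have hS3 : S ≤ 3 := by
    have h1 := bU x0 hx0
    have h2 : S ≤ ‖U x0 - 1‖ + 1 := by
      have := norm_add_le (U x0 - 1) 1
      simpa using this
    have h3 : M * (1 + S * T * M) / (2 * σ) ≤ (1 + S) / 2 := by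
      rw [div_le_div_iff₀ (by positivity) (by positivity)]
      have e1 : M ≤ σ := by nlinarith [mul_pos hT (pow_pos hM 2)]
      have e2 : T * M ^ 2 ≤ σ := by linarith
      nlinarith [mul_le_mul_of_nonneg_left e2 hS0]
    linarith
  intro x hx
  refine ⟨(bU x hx).trans ?_, (bV x hx).trans ?_⟩
  · gcongr
  · gcongr

/-- **Lemma 2, equation (18)**: for fixed `δ ∈ (0, π/2)` and `x ∈ [0,T)` there are
`C > 0` and `R ≥ 1` such that for `arg λ ∈ [δ, π−δ]` and `|λ| ≥ R`:
`‖2 e^{iλ(T−x)} Z₁(x,λ) − (1, −i)ᵀ‖ ≤ C/|λ|`. -/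
theorem statement16
    (T : ℝ) (hT : 0 < T)
    (p q : ℝ → ℂ) (hp : AbsContOn p T) (hq : AbsContOn q T)
    (Z₁ : ℂ → ℝ → ℂ × ℂ)
    (hZ₁ : ∀ lam, IsDiracSol p q T lam (Z₁ lam) ∧ Z₁ lam T = (1, 0))
    (δ : ℝ) (hδ : δ ∈ Ioo (0 : ℝ) (Real.pi / 2))
    (x : ℝ) (hx : x ∈ Ico (0 : ℝ) T) :
    ∃ C > (0 : ℝ), ∃ R : ℝ, 1 ≤ R ∧
      ∀ lam : ℂ, Complex.arg lam ∈ Icc δ (Real.pi - δ) → R ≤ ‖lam‖ →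
        ‖(2 * Complex.exp (Complex.I * lam * ((T - x : ℝ) : ℂ))) • Z₁ lam x -
            ((1 : ℂ), -Complex.I)‖ ≤ C / ‖lam‖ := by
  have cp := aux_cont hT hp
  have cq := aux_cont hT hq
  obtain ⟨x0, hx0, hmax⟩ := isCompact_Icc.exists_isMaxOn (nonempty_Icc.2 hT.le)
    (cp.norm.add cq.norm)
  obtain ⟨M, hM, hb⟩ : ∃ M : ℝ, 0 < M ∧ ∀ t ∈ Icc 0 T, ‖p t‖ + ‖q t‖ ≤ M := by
    refine ⟨‖p x0‖ + ‖q x0‖ + 1, by positivity, fun t ht => ?_⟩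
    have : ‖p t‖ + ‖q t‖ ≤ ‖p x0‖ + ‖q x0‖ := hmax ht
    linarith
  have hsin : 0 < Real.sin δ := Real.sin_pos_of_pos_of_lt_pi hδ.1 (by linarith [hδ.2, Real.pi_pos])
  have hTx : 0 < T - x := by linarith [hx.2]
  set K : ℝ := M * (1 + 3 * T * M) + 3 * M + 1 / (T - x) with hK
  have hK0 : 0 < K := by positivity
  refine ⟨K / (2 * Real.sin δ), by positivity, max 1 ((M + T * M ^ 2) / Real.sin δ),
    le_max_left _ _, fun lam harg hR => ?_⟩
  have hn : 0 < ‖lam‖ := lt_of_lt_of_le one_pos ((le_max_left _ _).trans hR)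
  have hsa : Real.sin δ ≤ Real.sin lam.arg := by
    rcases le_total lam.arg (Real.pi / 2) with h | h
    · exact Real.sin_le_sin_of_le_of_le_pi_div_two (by linarith [hδ.1, Real.pi_pos]) h harg.1
    · rw [← Real.sin_pi_sub lam.arg]
      exact Real.sin_le_sin_of_le_of_le_pi_div_two (by linarith [hδ.1, Real.pi_pos])
        (by linarith) (by linarith [harg.2])
  have him : ‖lam‖ * Real.sin δ ≤ lam.im := by
    rw [← Complex.norm_mul_sin_arg lam]
    exact mul_le_mul_of_nonneg_left hsa hn.le
  have hs : M + T * M ^ 2 ≤ lam.im := by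
    have := (le_max_right _ _).trans hR
    rw [div_le_iff₀ hsin] at this
    linarith
  have hσ : 0 < lam.im := lt_of_lt_of_le (by positivity) him
  obtain ⟨h1, h2⟩ := aux_main_s16 hT hM cp cq hb (hZ₁ lam).1 (hZ₁ lam).2 hs x ⟨hx.1, hx.2.le⟩
  set E := Complex.exp (Complex.I * lam * ((T - x : ℝ) : ℂ)) with hE
  set a := (Z₁ lam x).1 with ha
  set b := (Z₁ lam x).2 with hb'
  have hexp : Real.exp (-(2 * lam.im * (T - x))) ≤ (1 / (T - x)) / (2 * lam.im) := by
    rw [Real.exp_neg, div_div, mul_comm (T - x), ← one_div]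
    apply one_div_le_one_div_of_le (by positivity)
    linarith [Real.add_one_le_exp (2 * lam.im * (T - x))]
  have hsum : ‖E * (a + Complex.I * b) - 1‖ + ‖E * (a - Complex.I * b)‖ ≤ K / (2 * lam.im) := by
    have : K / (2 * lam.im) = M * (1 + 3 * T * M) / (2 * lam.im) + 3 * M / (2 * lam.im)
        + (1 / (T - x)) / (2 * lam.im) := by rw [hK]; ring
    linarith
  have hfin : K / (2 * lam.im) ≤ K / (2 * Real.sin δ) / ‖lam‖ := by
    rw [div_div]
    apply div_le_div_of_nonneg_left hK0.le (by positivity)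
    linarith
  refine le_trans ?_ (hsum.trans hfin)
  rw [Prod.norm_def]
  apply max_le
  · have : ((2 * E) • Z₁ lam x - ((1 : ℂ), -Complex.I)).1
        = (E * (a + Complex.I * b) - 1) + E * (a - Complex.I * b) := by
      simp only [Prod.fst_sub, Prod.smul_fst, smul_eq_mul, ← ha]; ring
    rw [this]; exact norm_add_le _ _
  · have : ((2 * E) • Z₁ lam x - ((1 : ℂ), -Complex.I)).2
        = -Complex.I * ((E * (a + Complex.I * b) - 1) - E * (a - Complex.I * b)) := by
      simp only [Prod.snd_sub, Prod.smul_snd, smul_eq_mul, ← hb']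
      linear_combination (2 * E * b) * Complex.I_mul_I
    rw [this, norm_mul, norm_neg, Complex.norm_I, one_mul]; exact norm_sub_le _ _
end
end
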